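/- Let b > 0 be real with b² irrational, let x ∈ ℝ, let 0 < δ < min(b,b⁻¹), and let γ_δ be the contour consisting of the real axis with the segment [−δ, δ] replaced by the semicircle of radius δ below the origin. Then the improper contour integral lim_{R,R'→∞} ∫_{γ_δ, −R ≤ Re y ≤ R'} e^{−2πixy}·e^{2πic_b y} / e_b(−y − c_b) dy exists, is independent of δ, and equals ζ₀·e_b(x), where ζ₀ := e^{πi(1−4c_b²)/12}. (Here e_b(−y−c_b) is understood via the meromorphic continuation of e_b; the only zero of e_b(−y−c_b) near γ_δ is the simple zero at y = 0.) -/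

import Mathlib

open MeasureTheory Complex Real Filter Topology

noncomputable section

/-- The special point `c_b = i(b+b⁻¹)/2`. -/
def cb (b : ℝ) : ℂ := Complex.I * ((b : ℂ) + (b : ℂ)⁻¹) / 2

/-- The integrand in the integral representation of the noncompact quantum dilogarithm. -/
def ebIntegrand (b ε : ℝ) (z : ℂ) (t : ℝ) : ℂ :=
  Complex.exp (-2 * Complex.I * z * ((t : ℂ) + Complex.I * (ε : ℂ))) /
    (((t : ℂ) + Complex.I * (ε : ℂ)) *
      Complex.sinh ((b : ℂ) * ((t : ℂ) + Complex.I * (ε : ℂ))) *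
      Complex.sinh ((b : ℂ)⁻¹ * ((t : ℂ) + Complex.I * (ε : ℂ))))

/-- The noncompact quantum dilogarithm defined with contour parameter `ε`. -/
def ebE (b ε : ℝ) (z : ℂ) : ℂ :=
  Complex.exp ((1 / 4 : ℂ) * ∫ t : ℝ, ebIntegrand b ε z t)

/-- The noncompact quantum dilogarithm `e_b` (canonical choice of contour parameter;
the value is independent of this choice). -/
def eb (b : ℝ) (z : ℂ) : ℂ := ebE b (π * min b b⁻¹ / 2) z

/-- The set `{c_b + i(mb + nb⁻¹) : m, n ∈ ℤ≥0}` of poles of the continuation of `e_b`. -/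
def ebPoles (b : ℝ) : Set ℂ :=
  {z | ∃ m n : ℕ, z = cb b + Complex.I * ((m : ℂ) * (b : ℂ) + (n : ℂ) * (b : ℂ)⁻¹)}

/-- The constant `ζ₀ = e^{πi(1−4c_b²)/12}`. -/
def zeta0 (b : ℝ) : ℂ := Complex.exp ((π : ℂ) * Complex.I * (1 - 4 * (cb b) ^ 2) / 12)

/-! ### Basic estimates on the integrand -/

/-- The contour parameter. -/
def ep (b : ℝ) : ℝ := π * min b b⁻¹ / 2

lemma min_pos_b {b : ℝ} (hb : 0 < b) : 0 < min b b⁻¹ := lt_min hb (inv_pos.mpr hb)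

lemma ep_pos {b : ℝ} (hb : 0 < b) : 0 < ep b := by
  have := min_pos_b hb
  unfold ep; positivity

lemma b_mul_min {b : ℝ} (hb : 0 < b) : b * min b b⁻¹ ≤ 1 := by
  calc b * min b b⁻¹ ≤ b * b⁻¹ := by gcongr; exact min_le_right _ _
    _ = 1 := mul_inv_cancel₀ hb.ne'

lemma binv_mul_min {b : ℝ} (hb : 0 < b) : b⁻¹ * min b b⁻¹ ≤ 1 := by
  calc b⁻¹ * min b b⁻¹ ≤ b⁻¹ * b := by gcongr; exact min_le_left _ _
    _ = 1 := inv_mul_cancel₀ hb.ne'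

lemma sin_b_ep {b : ℝ} (hb : 0 < b) : 0 < Real.sin (b * ep b) := by
  have h1 := b_mul_min hb
  have h2 := ep_pos hb
  apply Real.sin_pos_of_pos_of_lt_pi (by positivity)
  have : b * ep b = π / 2 * (b * min b b⁻¹) := by unfold ep; ring
  rw [this]
  nlinarith [Real.pi_pos]

lemma sin_binv_ep {b : ℝ} (hb : 0 < b) : 0 < Real.sin (b⁻¹ * ep b) := by
  have h1 := binv_mul_min hb
  have h2 := ep_pos hb
  apply Real.sin_pos_of_pos_of_lt_pi (by positivity)
  have : b⁻¹ * ep b = π / 2 * (b⁻¹ * min b b⁻¹) := by unfold ep; ring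
  rw [this]
  nlinarith [Real.pi_pos]

lemma cosh_ge_exp_abs (x : ℝ) : Real.exp |x| / 2 ≤ Real.cosh x := by
  rw [← Real.cosh_abs, Real.cosh_eq]
  have := Real.exp_pos (-|x|)
  linarith

lemma norm_sinh_ge {a e t : ℝ} (h : 0 < Real.sin (a * e)) :
    Real.sin (a * e) * (Real.exp |a * t| / 2) ≤
      ‖Complex.sinh ((a : ℂ) * ((t : ℂ) + Complex.I * (e : ℂ)))‖ := by
  have h1 : Complex.sinh ((a : ℂ) * ((t : ℂ) + Complex.I * (e : ℂ))) =
      ((Real.sinh (a * t) * Real.cos (a * e) : ℝ) : ℂ) +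
        ((Real.cosh (a * t) * Real.sin (a * e) : ℝ) : ℂ) * Complex.I := by
    have : (a : ℂ) * ((t : ℂ) + Complex.I * (e : ℂ)) = ((a * t : ℝ) : ℂ) + ((a * e : ℝ) : ℂ) * I := by
      push_cast; ring
    rw [this, Complex.sinh_add, Complex.cosh_mul_I, Complex.sinh_mul_I]
    push_cast; ring
  have h2 := Complex.abs_im_le_norm (Complex.sinh ((a : ℂ) * ((t : ℂ) + Complex.I * (e : ℂ))))
  refine le_trans ?_ h2
  rw [h1]
  simp only [Complex.add_im, Complex.ofReal_im, Complex.mul_im, Complex.ofReal_re, Complex.I_im,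
    Complex.I_re, mul_one, mul_zero, zero_add, add_zero]
  refine le_trans ?_ (le_abs_self _)
  rw [mul_comm]
  gcongr
  exact cosh_ge_exp_abs _

/-- constant in the bound of the integrand -/
def Dc (b : ℝ) : ℝ := 4 / (ep b * Real.sin (b * ep b) * Real.sin (b⁻¹ * ep b))

lemma Dc_pos {b : ℝ} (hb : 0 < b) : 0 < Dc b := by
  have := ep_pos hb
  have := sin_b_ep hb
  have := sin_binv_ep hb
  unfold Dc; positivity

lemma ebIntegrand_norm_le {b : ℝ} (hb : 0 < b) (z : ℂ) (t : ℝ) :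
    ‖ebIntegrand b (ep b) z t‖ ≤
      Dc b * Real.exp (2 * ep b * z.re) * Real.exp (-((b + b⁻¹ - 2 * |z.im|) * |t|)) := by
  have he := ep_pos hb
  have h1 := sin_b_ep hb
  have h2 := sin_binv_ep hb
  have g1 := norm_sinh_ge (t := t) h1
  have g2 := norm_sinh_ge (t := t) h2
  have g3 : ep b ≤ ‖(t : ℂ) + Complex.I * (ep b : ℂ)‖ := by
    refine le_trans ?_ (Complex.abs_im_le_norm _)
    simp [abs_of_pos he]
  rw [Complex.ofReal_inv] at g2
  unfold ebIntegrand
  rw [norm_div, norm_mul, norm_mul, Complex.norm_exp]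
  have hre : (-2 * Complex.I * z * ((t : ℂ) + Complex.I * (ep b : ℂ))).re =
      2 * ep b * z.re + 2 * z.im * t := by
    simp; ring
  rw [hre]
  have hst : z.im * t ≤ |z.im| * |t| := by rw [← abs_mul]; exact le_abs_self _
  calc _ ≤ Real.exp (2 * ep b * z.re + 2 * (|z.im| * |t|)) /
        (ep b * (Real.sin (b * ep b) * (Real.exp |b * t| / 2)) *
          (Real.sin (b⁻¹ * ep b) * (Real.exp |b⁻¹ * t| / 2))) := by
        gcongr ?_ / ?_
        · exact Real.exp_le_exp.mpr (by linarith)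
        · gcongr
    _ = _ := by
        rw [abs_mul, abs_mul, abs_of_pos hb, abs_of_pos (inv_pos.mpr hb), Real.exp_add]
        have : Real.exp (-((b + b⁻¹ - 2 * |z.im|) * |t|)) =
            Real.exp (2 * (|z.im| * |t|)) / (Real.exp (b * |t|) * Real.exp (b⁻¹ * |t|)) := by
          rw [← Real.exp_add, ← Real.exp_sub]; congr 1; ring
        rw [this, Dc]
        field_simp
        norm_num

lemma integrable_exp_neg_abs {c : ℝ} (hc : 0 < c) :
    Integrable (fun t : ℝ => Real.exp (-(c * |t|))) := by
  rw [← integrableOn_univ, ← Set.Iic_union_Ioi (a := (0 : ℝ))]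
  refine IntegrableOn.union ?_ ?_
  · refine (integrableOn_exp_mul_Iic hc 0).congr_fun ?_ measurableSet_Iic
    intro t ht
    simp only [Set.mem_Iic] at ht
    simp [abs_of_nonpos ht]
  · refine (exp_neg_integrableOn_Ioi 0 hc).congr_fun ?_ measurableSet_Ioi
    intro t ht
    simp only [Set.mem_Ioi] at ht
    simp [abs_of_pos ht]

/-- the exponent of `eb` -/
def lg (b : ℝ) (z : ℂ) : ℂ := (1 / 4 : ℂ) * ∫ t : ℝ, ebIntegrand b (ep b) z t

lemma eb_eq (b : ℝ) (z : ℂ) : eb b z = Complex.exp (lg b z) := rfl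

lemma continuous_ebIntegrand {b : ℝ} (hb : 0 < b) (z : ℂ) :
    Continuous (ebIntegrand b (ep b) z) := by
  unfold ebIntegrand
  refine Continuous.div (by fun_prop) (by fun_prop) ?_
  intro t
  have he := ep_pos hb
  have h1 := sin_b_ep hb
  have h2 := sin_binv_ep hb
  have g1 := norm_sinh_ge (t := t) h1
  have g2 := norm_sinh_ge (t := t) h2
  have g3 : ep b ≤ ‖(t : ℂ) + Complex.I * (ep b : ℂ)‖ := by
    refine le_trans ?_ (Complex.abs_im_le_norm _)
    simp [abs_of_pos he]
  rw [Complex.ofReal_inv] at g2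
  refine mul_ne_zero (mul_ne_zero ?_ ?_) ?_ <;> rw [← norm_pos_iff]
  · linarith
  · exact lt_of_lt_of_le (by positivity) g1
  · exact lt_of_lt_of_le (by positivity) g2

lemma integrable_ebIntegrand {b : ℝ} (hb : 0 < b) {z : ℂ} (hz : |z.im| < (b + b⁻¹) / 2) :
    Integrable (ebIntegrand b (ep b) z) := by
  have := (integrable_exp_neg_abs (c := b + b⁻¹ - 2 * |z.im|) (by linarith)).const_mul
    (Dc b * Real.exp (2 * ep b * z.re))
  exact this.mono' (continuous_ebIntegrand hb z).aestronglyMeasurable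
    (Eventually.of_forall fun t => ebIntegrand_norm_le hb z t)

lemma lg_bound {b : ℝ} (hb : 0 < b) {κ : ℝ} (hκ : 0 < κ) : ∃ C : ℝ, 0 < C ∧ ∀ z : ℂ,
    |z.im| ≤ (b + b⁻¹) / 2 - κ → ‖lg b z‖ ≤ C * Real.exp (2 * ep b * z.re) := by
  have hi := integrable_exp_neg_abs (c := 2 * κ) (by linarith)
  have h0 : 0 ≤ ∫ t : ℝ, Real.exp (-(2 * κ * |t|)) := integral_nonneg fun t => (Real.exp_pos _).le
  refine ⟨Dc b * (∫ t : ℝ, Real.exp (-(2 * κ * |t|))) + 1, ?_, ?_⟩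
  · have := Dc_pos hb
    positivity
  intro z hz
  have hD := Dc_pos hb
  have h1 : ‖∫ t : ℝ, ebIntegrand b (ep b) z t‖ ≤
      ∫ t : ℝ, Dc b * Real.exp (2 * ep b * z.re) * Real.exp (-(2 * κ * |t|)) := by
    refine norm_integral_le_of_norm_le (hi.const_mul _) (Eventually.of_forall fun t => ?_)
    refine (ebIntegrand_norm_le hb z t).trans ?_
    gcongr
    linarith
  rw [integral_const_mul] at h1
  unfold lg
  rw [norm_mul]
  have : ‖(1 / 4 : ℂ)‖ ≤ 1 := by norm_num
  have hE := Real.exp_pos (2 * ep b * z.re)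
  calc _ ≤ 1 * ‖∫ t : ℝ, ebIntegrand b (ep b) z t‖ := by gcongr
    _ ≤ _ := by nlinarith

/-! ### The inversion formula -/

lemma exists_div_of_isBigO {f : ℂ → ℂ} (hf : Differentiable ℂ f) {n : ℕ}
    (h : f =O[𝓝[≠] 0] fun u => u ^ (n + 1)) :
    ∃ g : ℂ → ℂ, Differentiable ℂ g ∧ (∀ u, f u = u * g u) ∧ g =O[𝓝[≠] 0] fun u => u ^ n := by
  have h0 : f 0 = 0 := by
    have h1 : Tendsto f (𝓝[≠] 0) (𝓝 0) := by
      refine h.trans_tendsto ?_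
      have : Tendsto (fun u : ℂ => u ^ (n + 1)) (𝓝 0) (𝓝 (0 ^ (n + 1))) :=
        (continuous_pow (n + 1)).tendsto 0
      rw [zero_pow (Nat.succ_ne_zero n)] at this
      exact this.mono_left nhdsWithin_le_nhds
    have h2 : Tendsto f (𝓝[≠] 0) (𝓝 (f 0)) :=
      (hf.continuous.tendsto 0).mono_left nhdsWithin_le_nhds
    exact tendsto_nhds_unique h2 h1
  have hmul : ∀ u, f u = u * dslope f 0 u := by
    intro u
    have := sub_smul_dslope f 0 u
    simp only [sub_zero, smul_eq_mul, h0] at this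
    exact this.symm
  refine ⟨dslope f 0, ?_, hmul, ?_⟩
  · have := (Complex.differentiableOn_dslope (f := f) (s := Set.univ) (c := 0) univ_mem).mpr
      hf.differentiableOn
    exact differentiableOn_univ.mp this
  · obtain ⟨C, hC⟩ := h.bound
    refine Asymptotics.IsBigO.of_bound C ?_
    filter_upwards [hC, self_mem_nhdsWithin] with u hu hne
    have hne' : 0 < ‖u‖ := norm_pos_iff.mpr hne
    rw [hmul u, norm_mul, norm_pow, pow_succ] at hu
    rw [norm_pow]
    have : ‖u‖ * ‖dslope f 0 u‖ ≤ ‖u‖ * (C * ‖u‖ ^ n) := by linarith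
    exact le_of_mul_le_mul_left this hne'

lemma exp_taylor : ∃ θ : ℂ → ℂ, Differentiable ℂ θ ∧
    ∀ u, Complex.exp u = 1 + u + u ^ 2 / 2 + u ^ 3 / 6 + u ^ 4 * θ u := by
  have h : (fun u : ℂ => Complex.exp u - (1 + u + u ^ 2 / 2 + u ^ 3 / 6)) =O[𝓝[≠] 0]
      fun u => u ^ (3 + 1) := by
    refine Asymptotics.IsBigO.of_bound 1 ?_
    refine Filter.Eventually.filter_mono nhdsWithin_le_nhds ?_
    filter_upwards [Metric.ball_mem_nhds (0 : ℂ) one_pos] with u hu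
    have := Complex.exp_bound (x := u) (by simpa using (mem_ball_zero_iff.mp hu).le) (n := 4)
      (by norm_num)
    simp only [Finset.sum_range_succ, Finset.sum_range_zero, Nat.factorial] at this
    rw [norm_pow]
    norm_num at this ⊢
    refine this.trans ?_
    have : 0 ≤ ‖u‖ ^ 4 := by positivity
    linarith
  obtain ⟨g1, d1, e1, o1⟩ := exists_div_of_isBigO (by fun_prop) h
  obtain ⟨g2, d2, e2, o2⟩ := exists_div_of_isBigO d1 o1
  obtain ⟨g3, d3, e3, o3⟩ := exists_div_of_isBigO d2 o2
  obtain ⟨g4, d4, e4, o4⟩ := exists_div_of_isBigO (n := 0) d3 o3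
  refine ⟨g4, d4, fun u => ?_⟩
  have := e1 u
  rw [e2 u, e3 u, e4 u] at this
  linear_combination this

lemma sinh_taylor : ∃ α : ℂ → ℂ, Differentiable ℂ α ∧
    ∀ u, Complex.sinh u = u * (1 + u ^ 2 / 6 + u ^ 3 * α u) := by
  obtain ⟨θ, hd, he⟩ := exp_taylor
  refine ⟨fun u => (θ u - θ (-u)) / 2, by fun_prop, fun u => ?_⟩
  rw [Complex.sinh, he u, he (-u)]
  ring

lemma sinh_ne_zero_of_im {u : ℂ} (h0 : u ≠ 0) (h : |u.im| < π) : Complex.sinh u ≠ 0 := by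
  intro hs
  have h1 : Complex.sinh u =
      ((Real.sinh u.re * Real.cos u.im : ℝ) : ℂ) +
        ((Real.cosh u.re * Real.sin u.im : ℝ) : ℂ) * Complex.I := by
    conv_lhs => rw [← Complex.re_add_im u]
    rw [Complex.sinh_add, Complex.cosh_mul_I, Complex.sinh_mul_I]
    push_cast; ring
  rw [h1] at hs
  have him := congrArg Complex.im hs
  have hre := congrArg Complex.re hs
  simp only [Complex.add_im, Complex.ofReal_im, Complex.mul_im, Complex.ofReal_re, Complex.I_im,
    Complex.I_re, mul_one, mul_zero, zero_add, add_zero, Complex.zero_im, Complex.zero_re,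
    Complex.add_re, Complex.mul_re, sub_zero] at him hre
  have hsin : Real.sin u.im = 0 := by
    rcases mul_eq_zero.mp him with h' | h'
    · exact absurd h' (Real.cosh_pos _).ne'
    · exact h'
  have hy : u.im = 0 := by
    rw [abs_lt] at h
    exact (Real.sin_eq_zero_iff_of_lt_of_lt h.1 h.2).mp hsin
  rw [hy, Real.cos_zero, mul_one, Real.sinh_eq_zero] at hre
  exact h0 (Complex.ext (by simpa using hre) (by simpa using hy))

/-- The integrand as a function of a complex variable. -/
def Ew (b : ℝ) (z w : ℂ) : ℂ :=
  Complex.exp (-2 * Complex.I * z * w) /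
    (w * Complex.sinh ((b : ℂ) * w) * Complex.sinh ((b : ℂ)⁻¹ * w))

/-- minus the residue... the residue coefficient -/
def Rs (b : ℝ) (z : ℂ) : ℂ := -2 * z ^ 2 - ((b : ℂ) ^ 2 + ((b : ℂ)⁻¹) ^ 2) / 6

lemma Ew_decomp {b : ℝ} (hb : 0 < b) (z : ℂ) : ∃ ρ : ℂ → ℂ,
    (∀ w : ℂ, |w.im| ≤ ep b → DifferentiableAt ℂ ρ w) ∧
    ∀ w : ℂ, |w.im| ≤ ep b → w ≠ 0 →
      Ew b z w = 1 / w ^ 3 - 2 * I * z / w ^ 2 + Rs b z / w + ρ w := by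
  obtain ⟨θ, hθ, he⟩ := exp_taylor
  obtain ⟨α, hα, hs⟩ := sinh_taylor
  have hb' : (b : ℂ) ≠ 0 := by exact_mod_cast hb.ne'
  set c : ℂ := (b : ℂ)⁻¹ with hc
  have hbc : (b : ℂ) * c = 1 := mul_inv_cancel₀ hb'
  have hc0 : c ≠ 0 := inv_ne_zero hb'
  set Sg : ℂ := ((b : ℂ) ^ 2 + c ^ 2) / 6 with hSg
  let A : ℂ → ℂ := fun w => 1 + ((b : ℂ) * w) ^ 2 / 6 + ((b : ℂ) * w) ^ 3 * α ((b : ℂ) * w)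
  let B : ℂ → ℂ := fun w => 1 + (c * w) ^ 2 / 6 + (c * w) ^ 3 * α (c * w)
  let γ : ℂ → ℂ := fun w => (-2 * I * z) ^ 3 / 6 + (-2 * I * z) ^ 4 * w * θ (-2 * I * z * w)
  let a' : ℂ → ℂ := fun w => (b : ℂ) ^ 3 * α ((b : ℂ) * w)
  let b' : ℂ → ℂ := fun w => c ^ 3 * α (c * w)
  let μ : ℂ → ℂ := fun w => a' w + b' w + w * ((b : ℂ) ^ 2 / 6) * (c ^ 2 / 6)
    + w ^ 2 * ((b : ℂ) ^ 2 / 6) * b' w + w ^ 2 * (c ^ 2 / 6) * a' w + w ^ 3 * a' w * b' w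
  have hAB : ∀ w, A w * B w = 1 + Sg * w ^ 2 + w ^ 3 * μ w := by
    intro w; simp only [A, B, μ, a', b', hSg]; ring
  have hA : ∀ w : ℂ, |w.im| ≤ ep b → A w ≠ 0 := by
    intro w hw
    by_cases h0 : w = 0
    · simp [A, h0]
    · have h1 : Complex.sinh ((b : ℂ) * w) ≠ 0 := by
        apply sinh_ne_zero_of_im (mul_ne_zero hb' h0)
        have := b_mul_min hb
        have h2 : b * ep b = π / 2 * (b * min b b⁻¹) := by unfold ep; ring
        simp only [Complex.mul_im, Complex.ofReal_re, Complex.ofReal_im, zero_mul, add_zero, abs_mul,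
          abs_of_pos hb]
        have h3 : b * |w.im| ≤ b * ep b := by gcongr
        nlinarith [Real.pi_pos]
      rw [hs] at h1
      exact right_ne_zero_of_mul h1
  have hB : ∀ w : ℂ, |w.im| ≤ ep b → B w ≠ 0 := by
    intro w hw
    by_cases h0 : w = 0
    · simp [B, h0]
    · have h1 : Complex.sinh (c * w) ≠ 0 := by
        apply sinh_ne_zero_of_im (mul_ne_zero hc0 h0)
        have := binv_mul_min hb
        have hb1 : 0 < b⁻¹ := inv_pos.mpr hb
        have h2 : b⁻¹ * ep b = π / 2 * (b⁻¹ * min b b⁻¹) := by unfold ep; ring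
        rw [hc, ← Complex.ofReal_inv]
        simp only [Complex.mul_im, Complex.ofReal_re, Complex.ofReal_im, zero_mul, add_zero, abs_mul,
          abs_of_pos hb1]
        have h3 : b⁻¹ * |w.im| ≤ b⁻¹ * ep b := by gcongr
        nlinarith [Real.pi_pos]
      rw [hs] at h1
      exact right_ne_zero_of_mul h1
  refine ⟨fun w => (γ w + 2 * I * z * Sg - Rs b z * Sg * w
    - μ w * (1 - 2 * I * z * w + Rs b z * w ^ 2)) / (A w * B w), ?_, ?_⟩
  · intro w hw
    refine DifferentiableAt.div ?_ ?_ (mul_ne_zero (hA w hw) (hB w hw))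
    · simp only [γ, μ, a', b']; fun_prop
    · simp only [A, B]; fun_prop
  · intro w hw h0
    have hA' := hA w hw
    have hB' := hB w hw
    have hexp : Complex.exp (-2 * I * z * w) = 1 - 2 * I * z * w - 2 * z ^ 2 * w ^ 2 + w ^ 3 * γ w := by
      rw [he]; simp only [γ]
      have : I ^ 2 = -1 := Complex.I_sq
      linear_combination (2 * z ^ 2 * w ^ 2) * this
    have hR : Rs b z + Sg = -2 * z ^ 2 := by simp only [Rs, hSg, hc]; ring
    have hsb : Complex.sinh ((b : ℂ) * w) = (b : ℂ) * w * A w := hs _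
    have hsc : Complex.sinh (c * w) = c * w * B w := hs _
    unfold Ew
    rw [← hc, hsb, hsc]
    have hden : w * ((b : ℂ) * w * A w) * (c * w * B w) = w ^ 3 * (A w * B w) := by
      linear_combination (w ^ 3 * A w * B w) * hbc
    rw [hden, div_eq_iff (mul_ne_zero (pow_ne_zero 3 h0) (mul_ne_zero hA' hB')), hexp]
    have e1 : (1 / w ^ 3 - 2 * I * z / w ^ 2 + Rs b z / w) * w ^ 3 =
        1 - 2 * I * z * w + Rs b z * w ^ 2 := by field_simp
    have e2 : ∀ X : ℂ, X / (A w * B w) * (A w * B w) = X := fun X =>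
      div_mul_cancel₀ X (mul_ne_zero hA' hB')
    rw [add_mul]
    have e3 : ∀ X : ℂ, X / (A w * B w) * (w ^ 3 * (A w * B w)) = X * w ^ 3 := by
      intro X; rw [← e2 X]; ring_nf; field_simp
    rw [e3, ← mul_assoc, e1, hAB]
    linear_combination (-w ^ 2) * hR

lemma norm_sinh_ge_re (u : ℂ) : |Real.sinh u.re| ≤ ‖Complex.sinh u‖ := by
  have h1 : Complex.sinh u =
      ((Real.sinh u.re * Real.cos u.im : ℝ) : ℂ) +
        ((Real.cosh u.re * Real.sin u.im : ℝ) : ℂ) * Complex.I := by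
    conv_lhs => rw [← Complex.re_add_im u]
    rw [Complex.sinh_add, Complex.cosh_mul_I, Complex.sinh_mul_I]
    push_cast; ring
  rw [h1, Complex.norm_add_mul_I]
  apply Real.abs_le_sqrt
  have h2 := Real.cosh_sq u.re
  have h3 := Real.sin_sq_add_cos_sq u.im
  nlinarith [sq_nonneg (Real.sin u.im)]

lemma abs_sinh_ge {x : ℝ} (hx : 1 ≤ |x|) : Real.exp |x| / 4 ≤ |Real.sinh x| := by
  rw [Real.abs_sinh, Real.sinh_eq]
  have h1 : Real.exp (-|x|) ≤ 1 := by
    rw [Real.exp_le_one_iff]; linarith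
  have h2 : 2 ≤ Real.exp |x| := by
    have := Real.add_one_le_exp |x|
    linarith
  linarith

lemma Ew_far {b : ℝ} (hb : 0 < b) {z : ℂ} (hz : |z.im| < (b + b⁻¹) / 2) :
    ∃ M T0 : ℝ, 0 < M ∧ 1 ≤ T0 ∧ ∀ w : ℂ, |w.im| ≤ ep b → T0 ≤ |w.re| → ‖Ew b z w‖ ≤ M / |w.re| := by
  have hb1 := inv_pos.mpr hb
  refine ⟨16 * Real.exp (2 * |z.re| * ep b), max 1 (max b b⁻¹), by positivity, le_max_left _ _, ?_⟩
  intro w hw hT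
  have hT1 : 1 ≤ |w.re| := le_trans (le_max_left _ _) hT
  have hTb : b ≤ |w.re| := le_trans (le_trans (le_max_left _ _) (le_max_right _ _)) hT
  have hTc : b⁻¹ ≤ |w.re| := le_trans (le_trans (le_max_right _ _) (le_max_right _ _)) hT
  have r1 : ((b : ℂ) * w).re = b * w.re := by simp
  have r2 : ((b : ℂ)⁻¹ * w).re = b⁻¹ * w.re := by rw [← Complex.ofReal_inv]; simp
  have s1 : Real.exp (b * |w.re|) / 4 ≤ ‖Complex.sinh ((b : ℂ) * w)‖ := by
    refine le_trans ?_ (norm_sinh_ge_re _)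
    rw [r1]
    have : |b * w.re| = b * |w.re| := by rw [abs_mul, abs_of_pos hb]
    rw [← this]
    apply abs_sinh_ge
    rw [this]
    calc 1 = b * b⁻¹ := (mul_inv_cancel₀ hb.ne').symm
      _ ≤ _ := by gcongr
  have s2 : Real.exp (b⁻¹ * |w.re|) / 4 ≤ ‖Complex.sinh ((b : ℂ)⁻¹ * w)‖ := by
    refine le_trans ?_ (norm_sinh_ge_re _)
    rw [r2]
    have : |b⁻¹ * w.re| = b⁻¹ * |w.re| := by rw [abs_mul, abs_of_pos hb1]
    rw [← this]
    apply abs_sinh_ge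
    rw [this]
    calc 1 = b⁻¹ * b := (inv_mul_cancel₀ hb.ne').symm
      _ ≤ _ := by gcongr
  unfold Ew
  rw [norm_div, norm_mul, norm_mul, Complex.norm_exp]
  have hre : (-2 * Complex.I * z * w).re = 2 * (z.re * w.im) + 2 * (z.im * w.re) := by
    simp; ring
  rw [hre]
  have h1 : z.re * w.im ≤ |z.re| * ep b := by
    calc z.re * w.im ≤ |z.re| * |w.im| := by rw [← abs_mul]; exact le_abs_self _
      _ ≤ _ := by gcongr
  have h2 : 2 * (z.im * w.re) ≤ (b + b⁻¹) * |w.re| := by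
    calc 2 * (z.im * w.re) ≤ 2 * (|z.im| * |w.re|) := by rw [← abs_mul]; gcongr; exact le_abs_self _
      _ ≤ 2 * ((b + b⁻¹) / 2 * |w.re|) := by gcongr
      _ = _ := by ring
  have hw0 : 0 < |w.re| := by linarith
  calc _ ≤ Real.exp (2 * |z.re| * ep b + (b * |w.re| + b⁻¹ * |w.re|)) /
        (|w.re| * (Real.exp (b * |w.re|) / 4) * (Real.exp (b⁻¹ * |w.re|) / 4)) := by
        gcongr ?_ / ?_
        · exact Real.exp_le_exp.mpr (by nlinarith)
        · gcongr
          exact Complex.abs_re_le_norm w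
    _ = _ := by
        rw [Real.exp_add, Real.exp_add]
        field_simp
        norm_num

/-- primitive of the difference of principal parts -/
def Prim (b : ℝ) (z : ℂ) (t : ℝ) : ℂ :=
  -(1 / 2) * (1 / ((t : ℂ) + I * ep b) ^ 2 - 1 / ((t : ℂ) - I * ep b) ^ 2)
  + 2 * I * z * (1 / ((t : ℂ) + I * ep b) - 1 / ((t : ℂ) - I * ep b))
  - 2 * I * Rs b z * ((Real.arctan (t / ep b) : ℝ) : ℂ)

def PP (b : ℝ) (z w : ℂ) : ℂ := 1 / w ^ 3 - 2 * I * z / w ^ 2 + Rs b z / w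

lemma wp_ne {e : ℝ} (he : 0 < e) (t : ℝ) : (t : ℂ) + I * e ≠ 0 := by
  intro h
  have := congrArg Complex.im h
  simp at this
  exact he.ne' this

lemma wm_ne {e : ℝ} (he : 0 < e) (t : ℝ) : (t : ℂ) - I * e ≠ 0 := by
  intro h
  have := congrArg Complex.im h
  simp at this
  exact he.ne' this

lemma hasDerivAt_Prim {b : ℝ} (hb : 0 < b) (z : ℂ) (t : ℝ) :
    HasDerivAt (Prim b z) (PP b z (t + I * ep b) - PP b z (t - I * ep b)) t := by
  have he := ep_pos hb
  have hp := wp_ne he t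
  have hm := wm_ne he t
  have d1 : HasDerivAt (fun t : ℝ => (t : ℂ) + I * ep b) 1 t :=
    (Complex.ofRealCLM.hasDerivAt (x := t)).add_const _
  have d2 : HasDerivAt (fun t : ℝ => (t : ℂ) - I * ep b) 1 t :=
    (Complex.ofRealCLM.hasDerivAt (x := t)).sub_const _
  have d3 : HasDerivAt (fun t : ℝ => ((Real.arctan (t / ep b) : ℝ) : ℂ))
      ((1 / (1 + (t / ep b) ^ 2) * (1 / ep b) : ℝ) : ℂ) t := by
    apply HasDerivAt.ofReal_comp
    exact ((hasDerivAt_id t).div_const (ep b)).arctan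
  have p1 := (d1.pow 2).inv (pow_ne_zero 2 hp)
  have p2 := (d2.pow 2).inv (pow_ne_zero 2 hm)
  have q1 := d1.inv hp
  have q2 := d2.inv hm
  have tot := (((p1.sub p2).const_mul (-(1 / 2 : ℂ))).add ((q1.sub q2).const_mul (2 * I * z))).sub
    (d3.const_mul (2 * I * Rs b z))
  have tot' : HasDerivAt (Prim b z) _ t :=
    tot.congr_of_eventuallyEq (Eventually.of_forall fun s => by simp [Prim])
  refine tot'.congr_deriv (Eq.symm ?_)
  · have hε : (ep b : ℂ) ≠ 0 := by exact_mod_cast he.ne'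
    have hq : (1 : ℂ) + ((t : ℂ) / (ep b : ℂ)) ^ 2 ≠ 0 := by
      have : (0 : ℝ) < 1 + (t / ep b) ^ 2 := by positivity
      exact_mod_cast this.ne'
    have hprod : ((t : ℂ) + I * ep b) * ((t : ℂ) - I * ep b) = (ep b : ℂ) ^ 2 * (1 + ((t : ℂ) / (ep b : ℂ)) ^ 2) := by
      have : I ^ 2 = -1 := Complex.I_sq
      field_simp
      linear_combination (-(ep b : ℂ) ^ 2) * this
    have harc : (1 : ℂ) / (1 + ((t : ℂ) / (ep b : ℂ)) ^ 2) * (1 / (ep b : ℂ)) =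
        ep b / (((t : ℂ) + I * ep b) * ((t : ℂ) - I * ep b)) := by
      rw [hprod]; field_simp
    push_cast
    rw [harc]
    unfold PP
    simp only [Pi.pow_apply]
    generalize hP : (t : ℂ) + I * ep b = P at *
    generalize hM : (t : ℂ) - I * ep b = M at *
    have hPM : (ep b : ℂ) * (2 * I) = P - M := by rw [← hP, ← hM]; ring
    have h5 : 2 * I * Rs b z * ((ep b : ℂ) / (P * M)) = Rs b z * (P - M) / (P * M) := by
      rw [← hPM]; ring
    rw [h5]
    field_simp
    ring

lemma tendsto_Prim {b : ℝ} (hb : 0 < b) (z : ℂ) :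
    Tendsto (fun T : ℝ => Prim b z T - Prim b z (-T)) atTop (𝓝 (-2 * π * I * Rs b z)) := by
  have he := ep_pos hb
  have inv0 : ∀ c : ℂ, Tendsto (fun T : ℝ => 1 / ((T : ℂ) + c)) (atTop : Filter ℝ) (𝓝 0) ∧
      Tendsto (fun T : ℝ => 1 / (((-T : ℝ) : ℂ) + c)) (atTop : Filter ℝ) (𝓝 0) := by
    intro c
    have key : ∀ σ : ℝ, |σ| = 1 → Tendsto (fun T : ℝ => 1 / (((σ * T : ℝ) : ℂ) + c)) atTop (𝓝 0) := by
      intro σ hσ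
      simp only [one_div]
      apply tendsto_inv₀_cobounded.comp
      rw [← tendsto_norm_atTop_iff_cobounded]
      refine tendsto_atTop_mono' _ ?_ (tendsto_atTop_add_const_right atTop (-‖c‖) tendsto_id)
      filter_upwards [eventually_ge_atTop 0] with T hT
      have := norm_sub_norm_le (((σ * T : ℝ) : ℂ)) (-c)
      rw [norm_neg, sub_neg_eq_add, Complex.norm_real, Real.norm_eq_abs, abs_mul, hσ,
        abs_of_nonneg hT] at this
      simpa [sub_eq_add_neg] using this
    exact ⟨by simpa using key 1 (by simp), by simpa using key (-1) (by simp)⟩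
  obtain ⟨a1, a2⟩ := inv0 (I * ep b)
  obtain ⟨a3, a4⟩ := inv0 (-(I * ep b))
  have at1 : Tendsto (fun T : ℝ => ((Real.arctan (T / ep b) : ℝ) : ℂ)) atTop (𝓝 ((π / 2 : ℝ) : ℂ)) := by
    apply (Complex.continuous_ofReal.tendsto _).comp
    have := Real.tendsto_arctan_atTop.mono_right nhdsWithin_le_nhds
    exact this.comp (tendsto_id.atTop_div_const he)
  have at2 : Tendsto (fun T : ℝ => ((Real.arctan (-T / ep b) : ℝ) : ℂ)) atTop (𝓝 (-((π / 2 : ℝ) : ℂ))) := by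
    refine at1.neg.congr ?_
    intro T
    rw [neg_div, Real.arctan_neg]; push_cast; ring
  have A := (((((a1.pow 2).sub (a3.pow 2)).const_mul (-(1 / 2 : ℂ))).add
    ((a1.sub a3).const_mul (2 * I * z))).sub (at1.const_mul (2 * I * Rs b z)))
  have B := (((((a2.pow 2).sub (a4.pow 2)).const_mul (-(1 / 2 : ℂ))).add
    ((a2.sub a4).const_mul (2 * I * z))).sub (at2.const_mul (2 * I * Rs b z)))
  refine ((A.sub B).congr ?_).trans (le_of_eq ?_)
  · intro T
    simp only [Prim, one_div, inv_pow, sub_eq_add_neg]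
  · congr 1; push_cast; ring

lemma lg_inversion {b : ℝ} (hb : 0 < b) {z : ℂ} (hz : |z.im| < (b + b⁻¹) / 2) :
    lg b z + lg b (-z) =
      π * I * z ^ 2 + π * I * ((b : ℂ) ^ 2 + ((b : ℂ)⁻¹) ^ 2) / 12 := by
  have he := ep_pos hb
  have hz' : |(-z).im| < (b + b⁻¹) / 2 := by simpa using hz
  set e := ep b with hedef
  obtain ⟨ρ, hd, hdec⟩ := Ew_decomp hb z
  obtain ⟨M, T0, hM, hT0, hfar⟩ := Ew_far hb hz
  have hi1 := integrable_ebIntegrand hb hz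
  have hi2 := integrable_ebIntegrand hb hz'
  have hD := fun t => hasDerivAt_Prim hb z t
  have cE1 := continuous_ebIntegrand hb z
  have cE2' := continuous_ebIntegrand hb (-z)
  simp only [← hedef] at hd hdec hfar hi1 hi2 hD cE1 cE2'
  have up : ∀ t : ℝ, ebIntegrand b e z t = PP b z (t + I * e) + ρ (t + I * e) := by
    intro t
    have := hdec (t + I * e) (by simp [abs_of_pos he]) (wp_ne he t)
    simpa [Ew, ebIntegrand, PP] using this
  have lo : ∀ t : ℝ, -ebIntegrand b e (-z) (-t) = PP b z (t - I * e) + ρ (t - I * e) := by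
    intro t
    have := hdec (t - I * e) (by simp [abs_of_pos he]) (wm_ne he t)
    rw [PP, ← this]
    unfold Ew ebIntegrand
    have h1 : (((-t : ℝ) : ℂ) + I * (e : ℂ)) = -(t - I * e) := by push_cast; ring
    have s1 : (b : ℂ) * -(t - I * e) = -((b : ℂ) * (t - I * e)) := by ring
    have s2 : (b : ℂ)⁻¹ * -(t - I * e) = -((b : ℂ)⁻¹ * (t - I * e)) := by ring
    have s3 : -2 * I * -z * -((t : ℂ) - I * e) = -2 * I * z * (t - I * e) := by ring
    rw [h1, s1, s2, s3, Complex.sinh_neg, Complex.sinh_neg, ← div_neg]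
    congr 1; ring
  have cρp : Continuous fun t : ℝ => ρ (t + I * e) := by
    rw [continuous_iff_continuousAt]
    intro t
    have := (hd (t + I * e) (by simp [abs_of_pos he])).continuousAt
    exact ContinuousAt.comp (f := fun t : ℝ => (t : ℂ) + I * e) this (by fun_prop)
  have cρm : Continuous fun t : ℝ => ρ (t - I * e) := by
    rw [continuous_iff_continuousAt]
    intro t
    have := (hd (t - I * e) (by simp [abs_of_pos he])).continuousAt
    exact ContinuousAt.comp (f := fun t : ℝ => (t : ℂ) - I * e) this (by fun_prop)
  have cE2 : Continuous fun t : ℝ => ebIntegrand b e (-z) (-t) :=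
    cE2'.comp continuous_neg
  have cPP : Continuous fun t : ℝ => PP b z (t + I * e) - PP b z (t - I * e) := by
    have : (fun t : ℝ => PP b z (t + I * e) - PP b z (t - I * e)) =
      fun t : ℝ => (ebIntegrand b e z t - ρ (t + I * e)) - (-ebIntegrand b e (-z) (-t) - ρ (t - I * e)) := by
      funext t; rw [up, lo]; ring
    rw [this]
    exact (cE1.sub cρp).sub (cE2.neg.sub cρm)
  have cρd : Continuous fun t : ℝ => ρ (t + I * e) - ρ (t - I * e) := cρp.sub cρm
  -- finite identity
  have fin : ∀ T : ℝ, (∫ t in (-T)..T, ebIntegrand b e z t) + (∫ t in (-T)..T, ebIntegrand b e (-z) (-t))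
      = (Prim b z T - Prim b z (-T)) + ((∫ t in (-T)..T, ρ (t + I * e)) - ∫ t in (-T)..T, ρ (t - I * e)) := by
    intro T
    rw [← intervalIntegral.integral_eq_sub_of_hasDerivAt (fun t _ => hD t)
      (cPP.intervalIntegrable _ _), ← intervalIntegral.integral_sub (cρp.intervalIntegrable _ _)
      (cρm.intervalIntegrable _ _), ← intervalIntegral.integral_add (cE1.intervalIntegrable _ _)
      (cE2.intervalIntegrable _ _), ← intervalIntegral.integral_add (cPP.intervalIntegrable _ _)
      (cρd.intervalIntegrable _ _)]
    apply intervalIntegral.integral_congr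
    intro t _
    have h1 := up t
    have h2 := lo t
    simp only
    linear_combination h1 - h2
  -- vertical sides vanish
  have vert : Tendsto (fun T : ℝ => (∫ t in (-T)..T, ρ (t + I * e)) - ∫ t in (-T)..T, ρ (t - I * e))
      atTop (𝓝 0) := by
    set M' : ℝ := M + 1 + 2 * ‖z‖ + ‖Rs b z‖ with hM'
    have hρ : ∀ w : ℂ, |w.im| ≤ e → T0 ≤ |w.re| → ‖ρ w‖ ≤ M' / |w.re| := by
      intro w hw hT
      have hr1 : 1 ≤ |w.re| := hT0.trans hT
      have hr0 : 0 < |w.re| := by linarith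
      have hn : |w.re| ≤ ‖w‖ := Complex.abs_re_le_norm w
      have hw0 : w ≠ 0 := by rw [← norm_pos_iff]; linarith
      have e1 : ρ w = Ew b z w - 1 / w ^ 3 + 2 * I * z / w ^ 2 - Rs b z / w := by
        rw [hdec w hw hw0]; ring
      rw [e1]
      have b1 := hfar w hw hT
      have b2 : ‖(1 : ℂ) / w ^ 3‖ ≤ 1 / |w.re| := by
        rw [norm_div, norm_pow, norm_one]
        gcongr
        calc |w.re| ≤ ‖w‖ := hn
          _ ≤ ‖w‖ ^ 3 := le_self_pow₀ (by linarith) (by norm_num)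
      have b3 : ‖2 * I * z / w ^ 2‖ ≤ 2 * ‖z‖ / |w.re| := by
        rw [norm_div, norm_pow, norm_mul, norm_mul, Complex.norm_I, mul_one]
        simp only [Complex.norm_ofNat]
        gcongr
        calc |w.re| ≤ ‖w‖ := hn
          _ ≤ ‖w‖ ^ 2 := le_self_pow₀ (by linarith) (by norm_num)
      have b4 : ‖Rs b z / w‖ ≤ ‖Rs b z‖ / |w.re| := by
        rw [norm_div]; gcongr
      calc _ ≤ ‖Ew b z w‖ + ‖1 / w ^ 3‖ + ‖2 * I * z / w ^ 2‖ + ‖Rs b z / w‖ := by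
            refine (norm_sub_le _ _).trans ?_
            gcongr
            refine (norm_add_le _ _).trans ?_
            gcongr
            exact norm_sub_le _ _
        _ ≤ M / |w.re| + 1 / |w.re| + 2 * ‖z‖ / |w.re| + ‖Rs b z‖ / |w.re| := by gcongr
        _ = _ := by rw [hM']; ring
    have rect : ∀ T : ℝ, (∫ t in (-T)..T, ρ (t + I * e)) - (∫ t in (-T)..T, ρ (t - I * e)) =
        I * (∫ s in (-e)..e, ρ (T + s * I)) - I * ∫ s in (-e)..e, ρ (-T + s * I) := by
      intro T
      have := Complex.integral_boundary_rect_eq_zero_of_differentiableOn ρ (⟨-T, -e⟩ : ℂ) ⟨T, e⟩ (by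
        intro w hw
        rw [Complex.mem_reProdIm] at hw
        have h2 := hw.2
        rw [Set.uIcc_of_le (by simp; linarith)] at h2
        exact (hd w (abs_le.mpr h2)).differentiableWithinAt)
      simp only [smul_eq_mul] at this
      have c1 : ∀ t : ℝ, (t : ℂ) + -(e : ℂ) * I = t - I * e := fun t => by ring
      have c2 : ∀ t : ℝ, (t : ℂ) + ((e : ℝ) : ℂ) * I = t + I * e := fun t => by ring
      simp only [c1, c2, Complex.ofReal_neg] at this
      linear_combination -this
    rw [tendsto_zero_iff_norm_tendsto_zero]
    have lim : Tendsto (fun T : ℝ => 4 * e * M' / T) atTop (𝓝 0) := tendsto_const_nhds.div_atTop tendsto_id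
    refine squeeze_zero' (Eventually.of_forall fun _ => norm_nonneg _) ?_ lim
    filter_upwards [eventually_ge_atTop T0] with T hT
    have hTpos : 0 < T := by linarith
    rw [rect]
    have v1 : ‖∫ s in (-e)..e, ρ (T + s * I)‖ ≤ M' / T * |e - (-e)| := by
      apply intervalIntegral.norm_integral_le_of_norm_le_const
      intro s hs
      rw [Set.uIoc_of_le (by linarith)] at hs
      have := hρ (T + s * I) (by simpa using abs_le.mpr ⟨hs.1.le, hs.2⟩) (by simpa [abs_of_pos hTpos] using hT)
      simpa [abs_of_pos hTpos] using this
    have v2 : ‖∫ s in (-e)..e, ρ (-T + s * I)‖ ≤ M' / T * |e - (-e)| := by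
      apply intervalIntegral.norm_integral_le_of_norm_le_const
      intro s hs
      rw [Set.uIoc_of_le (by linarith)] at hs
      have := hρ (-T + s * I) (by simpa using abs_le.mpr ⟨hs.1.le, hs.2⟩) (by simpa [abs_of_pos hTpos] using hT)
      simpa [abs_of_pos hTpos] using this
    calc _ ≤ ‖I * (∫ s in (-e)..e, ρ (T + s * I))‖ + ‖I * ∫ s in (-e)..e, ρ (-T + s * I)‖ := norm_sub_le _ _
      _ ≤ M' / T * |e - (-e)| + M' / T * |e - (-e)| := by
          rw [norm_mul, norm_mul, Complex.norm_I, one_mul, one_mul]; gcongr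
      _ = 4 * e * M' / T := by
          rw [abs_of_pos (by linarith)]; ring
  have lim1 : Tendsto (fun T : ℝ => ∫ t in (-T)..T, ebIntegrand b e z t) atTop
      (𝓝 (∫ t, ebIntegrand b e z t)) :=
    intervalIntegral_tendsto_integral hi1 tendsto_neg_atTop_atBot tendsto_id
  have lim2 : Tendsto (fun T : ℝ => ∫ t in (-T)..T, ebIntegrand b e (-z) (-t)) atTop
      (𝓝 (∫ t, ebIntegrand b e (-z) t)) := by
    rw [← integral_neg_eq_self]
    exact intervalIntegral_tendsto_integral hi2.comp_neg tendsto_neg_atTop_atBot tendsto_id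
  have lim3 := (tendsto_Prim hb z).add vert
  have key := tendsto_nhds_unique (lim1.add lim2) (lim3.congr fun T => (fin T).symm)
  unfold lg
  rw [← mul_add, ← hedef, key, Rs]
  ring

/-- inversion constant -/
def Kc (b : ℝ) : ℂ := Complex.exp (π * I * ((b : ℂ) ^ 2 + ((b : ℂ)⁻¹) ^ 2) / 12)

lemma eb_inversion {b : ℝ} (hb : 0 < b) {z : ℂ} (hz : |z.im| < (b + b⁻¹) / 2) :
    eb b z * eb b (-z) = Kc b * Complex.exp (π * I * z ^ 2) := by
  rw [eb_eq, eb_eq, ← Complex.exp_add, lg_inversion hb hz, Kc, ← Complex.exp_add, add_comm]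

/-- The standing hypotheses. -/
structure QD (b : ℝ) (f : ℂ → ℂ) : Prop where
  hb : 0 < b
  hirr : Irrational (b ^ 2)
  ext : ∀ z : ℂ, |z.im| < (b + b⁻¹) / 2 → f z = eb b z
  an : ∀ z : ℂ, z ∉ ebPoles b → AnalyticAt ℂ f z
  sh1 : ∀ z : ℂ, z - Complex.I * (b : ℂ) / 2 ∉ ebPoles b →
      z + Complex.I * (b : ℂ) / 2 ∉ ebPoles b →
      f (z - Complex.I * (b : ℂ) / 2) =
        (1 + Complex.exp (2 * (π : ℂ) * (b : ℂ) * z)) * f (z + Complex.I * (b : ℂ) / 2)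
  sh2 : ∀ z : ℂ, z - Complex.I * (b : ℂ)⁻¹ / 2 ∉ ebPoles b →
      z + Complex.I * (b : ℂ)⁻¹ / 2 ∉ ebPoles b →
      f (z - Complex.I * (b : ℂ)⁻¹ / 2) =
        (1 + Complex.exp (2 * (π : ℂ) * (b : ℂ)⁻¹ * z)) *
          f (z + Complex.I * (b : ℂ)⁻¹ / 2)

lemma cb_re (b : ℝ) : (cb b).re = 0 := by
  have : cb b = (((b + b⁻¹) / 2 : ℝ) : ℂ) * I := by unfold cb; push_cast; ring
  rw [this]; simp

lemma cb_im (b : ℝ) : (cb b).im = (b + b⁻¹) / 2 := by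
  have : cb b = (((b + b⁻¹) / 2 : ℝ) : ℂ) * I := by unfold cb; push_cast; ring
  rw [this]; simp

lemma not_pole {b : ℝ} (hb : 0 < b) {z : ℂ} (hz : z.re ≠ 0 ∨ z.im < (b + b⁻¹) / 2) : z ∉ ebPoles b := by
  rintro ⟨m, n, h⟩
  have e : z = (((b + b⁻¹) / 2 + (m * b + n * b⁻¹) : ℝ) : ℂ) * I := by
    rw [h]; unfold cb; push_cast; ring
  have h1 : z.re = 0 := by rw [e]; simp
  have h2 : z.im = (b + b⁻¹) / 2 + (m * b + n * b⁻¹) := by rw [e]; simp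
  have : 0 ≤ m * b + n * b⁻¹ := by positivity
  rcases hz with hz | hz
  · exact hz h1
  · linarith

namespace QD
variable {b : ℝ} {f : ℂ → ℂ}

lemma anAt (h : QD b f) {z : ℂ} (hz : z.re ≠ 0 ∨ z.im < (b + b⁻¹) / 2) : AnalyticAt ℂ f z :=
  h.an z (not_pole h.hb hz)

/-- inversion in the strip -/
lemma inv_strip (h : QD b f) {z : ℂ} (hz : |z.im| < (b + b⁻¹) / 2) :
    f z * f (-z) = Kc b * Complex.exp (π * I * z ^ 2) := by
  rw [h.ext z hz, h.ext (-z) (by simpa using hz), eb_inversion h.hb hz]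

lemma inv_pos_re (h : QD b f) {z : ℂ} (hz : 0 < z.re) :
    f z * f (-z) = Kc b * Complex.exp (π * I * z ^ 2) := by
  have hb := h.hb
  have hb1 := inv_pos.mpr hb
  have hU : IsPreconnected {z : ℂ | 0 < z.re} := (convex_halfSpace_re_gt 0).isPreconnected
  have a1 : AnalyticOnNhd ℂ (fun z => f z * f (-z)) {z : ℂ | 0 < z.re} := by
    intro w hw
    have hw' : 0 < w.re := hw
    have h1 := h.anAt (z := w) (Or.inl hw'.ne')
    have h2 := h.anAt (z := -w) (Or.inl (by simpa using hw'.ne'))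
    exact h1.mul (AnalyticAt.fun_comp (g := f) (f := fun w : ℂ => -w) h2 analyticAt_id.neg)
  have a2 : AnalyticOnNhd ℂ (fun z => Kc b * Complex.exp (π * I * z ^ 2)) {z : ℂ | 0 < z.re} := by
    intro w hw
    fun_prop
  refine a1.eqOn_of_preconnected_of_eventuallyEq a2 hU (z₀ := 1) (by simp) ?_ hz
  have : ∀ᶠ w : ℂ in 𝓝 1, |w.im| < (b + b⁻¹) / 2 := by
    have hc : Continuous fun w : ℂ => |w.im| := by fun_prop
    have := hc.tendsto 1
    simp only [Complex.one_im, abs_zero] at this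
    exact this.eventually (gt_mem_nhds (by positivity))
  filter_upwards [this] with w hw
  exact h.inv_strip hw

lemma inv (h : QD b f) {z : ℂ} (hz : |z.im| < (b + b⁻¹) / 2 ∨ z.re ≠ 0) :
    f z * f (-z) = Kc b * Complex.exp (π * I * z ^ 2) := by
  rcases hz with hz | hz
  · exact h.inv_strip hz
  · rcases lt_or_gt_of_ne hz with hz | hz
    · have := h.inv_pos_re (z := -z) (by simpa using hz)
      rw [neg_neg, neg_sq] at this
      rw [mul_comm]; exact this
    · exact h.inv_pos_re hz

end QD

/-- shifted dilogarithm -/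
def ph (b : ℝ) (f : ℂ → ℂ) (y : ℂ) : ℂ := f (y + cb b)

def c0 (b : ℝ) : ℂ := Complex.exp (-(I * π * (cb b) ^ 2)) / Kc b

lemma Kc_ne (b : ℝ) : Kc b ≠ 0 := Complex.exp_ne_zero _

lemma Kc_norm (b : ℝ) : ‖Kc b‖ = 1 := by
  unfold Kc
  have : (π * I * ((b : ℂ) ^ 2 + ((b : ℂ)⁻¹) ^ 2) / 12) = ((π * (b ^ 2 + b⁻¹ ^ 2) / 12 : ℝ) : ℂ) * I := by
    push_cast; ring
  rw [this, Complex.norm_exp_ofReal_mul_I]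

namespace QD
variable {b : ℝ} {f : ℂ → ℂ}

lemma ph_an (h : QD b f) {y : ℂ} (hy : y.re ≠ 0 ∨ y.im < 0) : AnalyticAt ℂ (ph b f) y := by
  have : AnalyticAt ℂ f (y + cb b) := h.anAt (by
    simp only [Complex.add_re, Complex.add_im, cb_re, cb_im, add_zero]
    rcases hy with hy | hy
    · exact Or.inl hy
    · right; linarith)
  exact AnalyticAt.fun_comp (g := f) (f := fun y : ℂ => y + cb b) this (by fun_prop)

lemma ph_diff (h : QD b f) {y : ℂ} (hy : y.re ≠ 0 ∨ y.im < 0) : DifferentiableAt ℂ (ph b f) y :=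
  (h.ph_an hy).differentiableAt

lemma ph_shift (h : QD b f) {p : ℝ} (hp : p = b ∨ p = b⁻¹) {y : ℂ} (hy : y.re ≠ 0 ∨ y.im < 0) :
    ph b f (y - I * p) = (1 - Complex.exp (2 * π * p * y)) * ph b f y := by
  have hb := h.hb
  have hb1 := inv_pos.mpr hb
  have hb0 : (b : ℂ) ≠ 0 := by exact_mod_cast hb.ne'
  have hp0 : 0 < p := by rcases hp with rfl | rfl <;> assumption
  have n1 : y + cb b - I * p ∉ ebPoles b := not_pole hb (by
    simp only [Complex.add_re, Complex.add_im, cb_re, cb_im, add_zero, Complex.sub_re, Complex.sub_im,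
      Complex.mul_re, Complex.mul_im, Complex.I_re, Complex.I_im, Complex.ofReal_re, Complex.ofReal_im]
    rcases hy with hy | hy
    · left; simpa using hy
    · right; linarith)
  have n2 : y + cb b ∉ ebPoles b := not_pole hb (by
    simp only [Complex.add_re, Complex.add_im, cb_re, cb_im, add_zero]
    rcases hy with hy | hy
    · left; simpa using hy
    · right; linarith)
  have key : f (y + cb b - I * p) = (1 + Complex.exp (2 * π * p * (y + cb b - I * p / 2))) * f (y + cb b) := by
    rcases hp with rfl | rfl
    · have := h.sh1 (y + cb p - I * p / 2) (by convert n1 using 1; ring_nf) (by convert n2 using 1; ring_nf)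
      convert this using 2 <;> ring_nf
    · have := h.sh2 (y + cb b - I * (b : ℂ)⁻¹ / 2) (by convert n1 using 1; push_cast; ring_nf) (by convert n2 using 1; ring_nf)
      push_cast at this ⊢
      convert this using 2 <;> ring_nf
  have hexp : Complex.exp (2 * π * p * (y + cb b - I * p / 2)) = - Complex.exp (2 * π * p * y) := by
    have : 2 * π * p * (y + cb b - I * p / 2) = 2 * π * p * y + π * I := by
      unfold cb
      rcases hp with rfl | rfl
      · field_simp; ring
      · push_cast; field_simp; ring
    rw [this, Complex.exp_add, Complex.exp_pi_mul_I]; ring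
  unfold ph
  rw [show y - I * p + cb b = y + cb b - I * p by ring, key, hexp]; ring

/-- relation between the statement integrand and `ph`. -/
lemma integrand_eq (h : QD b f) {y : ℂ} (hy : y.re ≠ 0 ∨ (y.im < 0 ∧ -(b + b⁻¹) < y.im)) :
    Complex.exp (2 * π * I * cb b * y) / f (-y - cb b) = c0 b * (Complex.exp (-(I * π * y ^ 2)) * ph b f y) := by
  have hi := h.inv (z := y + cb b) (by
    simp only [Complex.add_re, Complex.add_im, cb_re, cb_im, add_zero]
    rcases hy with hy | hy
    · exact Or.inr hy
    · left; rw [abs_lt]; constructor <;> linarith [hy.1, hy.2])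
  have e : -(y + cb b) = -y - cb b := by ring
  rw [e] at hi
  have hne : f (-y - cb b) ≠ 0 := by
    intro h0
    rw [h0, mul_zero] at hi
    exact mul_ne_zero (Kc_ne b) (Complex.exp_ne_zero _) hi.symm
  unfold c0 ph
  have hK := Kc_ne b
  have e2 : Complex.exp (2 * π * I * cb b * y) =
      Complex.exp (-(I * π * (cb b) ^ 2)) * Complex.exp (-(I * π * y ^ 2)) * Complex.exp (π * I * (y + cb b) ^ 2) := by
    rw [← Complex.exp_add, ← Complex.exp_add]; congr 1; ring
  rw [div_eq_iff hne, e2]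
  rw [mul_comm (π : ℂ) I] at hi ⊢
  field_simp
  linear_combination (-1 : ℂ) * hi

end QD

def pm (b : ℝ) : ℝ := max b b⁻¹
def qm (b : ℝ) : ℝ := min b b⁻¹

lemma pm_add_qm (b : ℝ) : pm b + qm b = b + b⁻¹ := max_add_min b b⁻¹
lemma pm_mem (b : ℝ) : pm b = b ∨ pm b = b⁻¹ := max_choice b b⁻¹
lemma qm_mem (b : ℝ) : qm b = b ∨ qm b = b⁻¹ := min_choice b b⁻¹

lemma norm_exp_sq (z : ℂ) : ‖Complex.exp (π * I * z ^ 2)‖ = Real.exp (-2 * π * (z.re * z.im)) := by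
  rw [Complex.norm_exp]; congr 1
  simp [sq]; ring

namespace QD
variable {b : ℝ} {f : ℂ → ℂ}

lemma qpos (h : QD b f) : 0 < qm b := min_pos_b h.hb
lemma ppos (h : QD b f) : 0 < pm b := lt_max_of_lt_left h.hb

lemma b_ne_binv (h : QD b f) : b ≠ b⁻¹ := by
  intro hh
  have : b ^ 2 = 1 := by
    rw [sq]; nth_rewrite 2 [hh]; exact mul_inv_cancel₀ h.hb.ne'
  have h2 := h.hirr
  rw [this] at h2
  exact h2 ⟨1, by simp⟩

lemma q_lt_p (h : QD b f) : qm b < pm b := by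
  rcases lt_or_gt_of_ne h.b_ne_binv with hh | hh
  · simp only [qm, pm, min_eq_left hh.le, max_eq_right hh.le, hh]
  · simp only [qm, pm, min_eq_right hh.le, max_eq_left hh.le, hh]

lemma pq_one (h : QD b f) : pm b * qm b = 1 := by
  unfold pm qm
  rw [max_mul_min, mul_inv_cancel₀ h.hb.ne']

lemma ph_eq (h : QD b f) {y : ℂ} (h1 : -(b + b⁻¹) < y.im) (h2 : y.im < 0) :
    ph b f y = Complex.exp (lg b (y + cb b)) := by
  unfold ph
  rw [h.ext, eb_eq]
  simp only [Complex.add_im, cb_im]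
  rw [abs_lt]; constructor <;> linarith

lemma strip_left (h : QD b f) {κ : ℝ} (hκ : 0 < κ) (A : ℝ) : ∃ M > 0, ∀ y : ℂ, -(b + b⁻¹) + κ ≤ y.im →
    y.im ≤ -κ → y.re ≤ A → ‖ph b f y‖ ≤ M := by
  obtain ⟨C, hC, hl⟩ := lg_bound h.hb hκ
  refine ⟨Real.exp (C * Real.exp (2 * ep b * A)), Real.exp_pos _, fun y h1 h2 h3 => ?_⟩
  rw [h.ph_eq (by linarith) (by linarith), Complex.norm_exp, Real.exp_le_exp]
  have := hl (y + cb b) (by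
    simp only [Complex.add_im, cb_im]; rw [abs_le]; constructor <;> linarith)
  simp only [Complex.add_re, cb_re, add_zero] at this
  have he := ep_pos h.hb
  calc _ ≤ ‖lg b (y + cb b)‖ := Complex.re_le_norm _
    _ ≤ _ := this
    _ ≤ _ := by gcongr

lemma strip_right (h : QD b f) {κ : ℝ} (hκ : 0 < κ) (A : ℝ) : ∃ M > 0, ∀ y : ℂ, -(b + b⁻¹) + κ ≤ y.im →
    y.im ≤ -κ → -A ≤ y.re → ‖ph b f y‖ ≤ M * Real.exp (-2 * π * (y.re * (y.im + (b + b⁻¹) / 2))) := by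
  obtain ⟨C, hC, hl⟩ := lg_bound h.hb hκ
  refine ⟨Real.exp (C * Real.exp (2 * ep b * A)), Real.exp_pos _, fun y h1 h2 h3 => ?_⟩
  have habs : |(y + cb b).im| < (b + b⁻¹) / 2 := by
    simp only [Complex.add_im, cb_im]; rw [abs_lt]; constructor <;> linarith
  have hi := h.inv_strip (z := y + cb b) habs
  have e1 : f (-(y + cb b)) = Complex.exp (lg b (-(y + cb b))) := by
    rw [h.ext _ (by rw [Complex.neg_im, abs_neg]; exact habs), eb_eq]
  have e2 : ph b f y = Kc b * Complex.exp (π * I * (y + cb b) ^ 2) * Complex.exp (-lg b (-(y + cb b))) := by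
    rw [← hi, e1, mul_assoc, ← Complex.exp_add, add_neg_cancel, Complex.exp_zero, mul_one]; rfl
  rw [e2, norm_mul, norm_mul, Kc_norm, one_mul, norm_exp_sq, mul_comm]
  simp only [Complex.add_im, cb_im, Complex.add_re, cb_re, add_zero]
  gcongr
  rw [Complex.norm_exp, Real.exp_le_exp]
  have := hl (-(y + cb b)) (by
    simp only [Complex.neg_im, Complex.add_im, cb_im]; rw [abs_le]; constructor <;> linarith)
  simp only [Complex.neg_re, Complex.add_re, cb_re, add_zero] at this
  have he := ep_pos h.hb
  calc _ ≤ ‖-lg b (-(y + cb b))‖ := Complex.re_le_norm _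
    _ = ‖lg b (-(y + cb b))‖ := norm_neg _
    _ ≤ _ := this
    _ ≤ _ := by gcongr; linarith

lemma norm_exp_py (p : ℝ) (y : ℂ) : ‖Complex.exp (2 * π * p * y)‖ = Real.exp (2 * π * p * y.re) := by
  rw [Complex.norm_exp]; congr 1
  have : (2 * π * p * y : ℂ) = ((2 * π * p : ℝ) : ℂ) * y := by push_cast; ring
  rw [this, Complex.re_ofReal_mul]

lemma left_bd (h : QD b f) {a κ : ℝ} (ha : 0 < a) (hκ : 0 < κ) : ∃ M > 0, ∀ y : ℂ, -(b + b⁻¹) + κ ≤ y.im →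
    y.im ≤ pm b - κ → y.re ≤ -a → ‖ph b f y‖ ≤ M := by
  have hp := h.ppos
  have hq := h.qpos
  have hpq := pm_add_qm b
  set κ' := min κ (qm b / 2) with hκ'
  have k1 : κ' ≤ κ := min_le_left _ _
  have k2 : κ' ≤ qm b / 2 := min_le_right _ _
  have k0 : 0 < κ' := lt_min hκ (by linarith)
  obtain ⟨M, hM, hl⟩ := h.strip_left k0 0
  have hE : Real.exp (2 * π * pm b * -a) < 1 := by
    rw [Real.exp_lt_one_iff]; nlinarith [mul_pos (mul_pos Real.pi_pos hp) ha]
  set D := 1 - Real.exp (2 * π * pm b * -a) with hD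
  have hD0 : 0 < D := by linarith
  refine ⟨max M (M / D), lt_max_of_lt_left hM, fun y h1 h2 h3 => ?_⟩
  by_cases hc : y.im ≤ -κ'
  · exact (hl y (by linarith) hc (by linarith)).trans (le_max_left _ _)
  · push Not at hc
    refine le_trans ?_ (le_max_right _ _)
    have hs := h.ph_shift (pm_mem b) (y := y) (Or.inl (by linarith : y.re < 0).ne)
    have hb1 := hl (y - I * pm b) (by simp; linarith) (by simp; linarith) (by simp; linarith)
    rw [hs, norm_mul] at hb1
    have hlow : D ≤ ‖1 - Complex.exp (2 * π * pm b * y)‖ := by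
      have := norm_sub_norm_le (1 : ℂ) (Complex.exp (2 * π * pm b * y))
      rw [norm_one, norm_exp_py] at this
      refine le_trans ?_ this
      rw [hD]; gcongr
    rw [le_div_iff₀ hD0]
    calc _ ≤ ‖ph b f y‖ * ‖1 - Complex.exp (2 * π * pm b * y)‖ := by gcongr
      _ ≤ M := by rw [mul_comm]; exact hb1

lemma right_bd (h : QD b f) {a κ : ℝ} (ha : 0 < a) (hκ : 0 < κ) : ∃ M > 0, ∀ y : ℂ, -(b + b⁻¹) + κ ≤ y.im →
    y.im ≤ pm b - κ → a ≤ y.re → ‖ph b f y‖ ≤ M * Real.exp (-2 * π * (y.re * (y.im + (b + b⁻¹) / 2))) := by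
  have hp := h.ppos
  have hq := h.qpos
  have hpq := pm_add_qm b
  set κ' := min κ (qm b / 2) with hκ'
  have k1 : κ' ≤ κ := min_le_left _ _
  have k2 : κ' ≤ qm b / 2 := min_le_right _ _
  have k0 : 0 < κ' := lt_min hκ (by linarith)
  obtain ⟨M, hM, hl⟩ := h.strip_right k0 0
  have hE : Real.exp (2 * π * pm b * -a) < 1 := by
    rw [Real.exp_lt_one_iff]; nlinarith [mul_pos (mul_pos Real.pi_pos hp) ha]
  set D := 1 - Real.exp (2 * π * pm b * -a) with hD
  have hD0 : 0 < D := by linarith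
  refine ⟨max M (M / D), lt_max_of_lt_left hM, fun y h1 h2 h3 => ?_⟩
  by_cases hc : y.im ≤ -κ'
  · refine (hl y (by linarith) hc (by linarith)).trans ?_
    gcongr
    exact le_max_left _ _
  · push Not at hc
    suffices hs : ‖ph b f y‖ ≤ M / D * Real.exp (-2 * π * (y.re * (y.im + (b + b⁻¹) / 2))) by
      refine hs.trans ?_
      gcongr
      exact le_max_right _ _
    have hs := h.ph_shift (pm_mem b) (y := y) (Or.inl (by linarith : 0 < y.re).ne')
    have hb1 := hl (y - I * pm b) (by simp; linarith) (by simp; linarith) (by simp; linarith)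
    rw [hs, norm_mul] at hb1
    have hlow : Real.exp (2 * π * pm b * y.re) * D ≤ ‖1 - Complex.exp (2 * π * pm b * y)‖ := by
      have := norm_sub_norm_le (Complex.exp (2 * π * pm b * y)) (1 : ℂ)
      rw [norm_one, norm_exp_py, norm_sub_rev] at this
      refine le_trans ?_ this
      have e3 : 1 ≤ Real.exp (2 * π * pm b * y.re) * Real.exp (2 * π * pm b * -a) := by
        rw [← Real.exp_add, Real.one_le_exp_iff]
        have : 0 ≤ 2 * π * pm b * (y.re - a) := mul_nonneg (by positivity) (by linarith)
        linarith
      rw [hD]; linarith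
    have e4 : Real.exp (-2 * π * ((y - I * pm b).re * ((y - I * pm b).im + (b + b⁻¹) / 2))) =
        Real.exp (-2 * π * (y.re * (y.im + (b + b⁻¹) / 2))) * Real.exp (2 * π * pm b * y.re) := by
      rw [← Real.exp_add]; congr 1; simp; ring
    rw [e4] at hb1
    have hX := Real.exp_pos (2 * π * pm b * y.re)
    rw [div_mul_eq_mul_div, le_div_iff₀ hD0]
    have : ‖ph b f y‖ * D * Real.exp (2 * π * pm b * y.re) ≤
        M * Real.exp (-2 * π * (y.re * (y.im + (b + b⁻¹) / 2))) * Real.exp (2 * π * pm b * y.re) := by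
      calc _ = ‖ph b f y‖ * (Real.exp (2 * π * pm b * y.re) * D) := by ring
        _ ≤ ‖ph b f y‖ * ‖1 - Complex.exp (2 * π * pm b * y)‖ := by gcongr
        _ ≤ _ := by rw [mul_comm]; linarith [hb1]
    exact le_of_mul_le_mul_right this hX

lemma left_tendsto_strip (h : QD b f) {u : ℂ} (h1 : -(b + b⁻¹) < u.im) (h2 : u.im < 0) :
    Tendsto (fun X : ℝ => ph b f (u - X)) atTop (𝓝 1) := by
  set κ := min (u.im + (b + b⁻¹)) (-u.im) with hκ
  have k1 : κ ≤ u.im + (b + b⁻¹) := min_le_left _ _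
  have k2 : κ ≤ -u.im := min_le_right _ _
  have k0 : 0 < κ := lt_min (by linarith) (by linarith)
  obtain ⟨C, hC, hl⟩ := lg_bound h.hb k0
  have he := ep_pos h.hb
  have t0 : Tendsto (fun X : ℝ => lg b (u - X + cb b)) atTop (𝓝 0) := by
    rw [tendsto_zero_iff_norm_tendsto_zero]
    have lim : Tendsto (fun X : ℝ => C * Real.exp (2 * ep b * (u.re - X))) atTop (𝓝 (C * 0)) := by
      apply Tendsto.const_mul
      apply Real.tendsto_exp_atBot.comp
      apply Tendsto.const_mul_atBot (by positivity)
      exact tendsto_atBot_add_const_left _ _ tendsto_neg_atTop_atBot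
    rw [mul_zero] at lim
    refine squeeze_zero (fun _ => norm_nonneg _) (fun X => ?_) lim
    have := hl (u - X + cb b) (by
      simp only [Complex.add_im, cb_im, Complex.sub_im, Complex.ofReal_im, sub_zero]
      rw [abs_le]; constructor <;> linarith)
    simpa [cb_re] using this
  have t1 := (Complex.continuous_exp.tendsto 0).comp t0
  rw [Complex.exp_zero] at t1
  refine t1.congr fun X => ?_
  rw [h.ph_eq (by simpa using h1) (by simpa using h2)]; rfl

lemma left_tendsto (h : QD b f) {u : ℂ} (h1 : -(b + b⁻¹) < u.im) (h2 : u.im < pm b) :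
    Tendsto (fun X : ℝ => ph b f (u - X)) atTop (𝓝 1) := by
  by_cases hc : u.im < 0
  · exact h.left_tendsto_strip h1 hc
  · push Not at hc
    have hp := h.ppos
    have hq := h.qpos
    have hpq := pm_add_qm b
    have t1 := h.left_tendsto_strip (u := u - I * pm b) (by simp; linarith) (by simp; linarith)
    have t2 : Tendsto (fun X : ℝ => Complex.exp (2 * π * pm b * (u - X))) atTop (𝓝 0) := by
      rw [tendsto_zero_iff_norm_tendsto_zero]
      simp only [norm_exp_py, Complex.sub_re, Complex.ofReal_re]
      apply Real.tendsto_exp_atBot.comp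
      apply Tendsto.const_mul_atBot (by positivity)
      exact tendsto_atBot_add_const_left _ _ tendsto_neg_atTop_atBot
    have t3 := t1.div ((tendsto_const_nhds (x := (1 : ℂ))).sub t2) (by simp)
    rw [sub_zero, div_one] at t3
    refine t3.congr' ?_
    filter_upwards [eventually_gt_atTop u.re] with X hX
    have hs := h.ph_shift (pm_mem b) (y := u - X) (Or.inl (by simp; linarith))
    have hne : 1 - Complex.exp (2 * π * pm b * (u - X)) ≠ 0 := by
      intro h0
      have h1 : Complex.exp (2 * π * pm b * (u - X)) = 1 := (sub_eq_zero.mp h0).symm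
      have h2 := congrArg norm h1
      rw [norm_exp_py, norm_one, Real.exp_eq_one_iff] at h2
      have : (u - (X : ℂ)).re < 0 := by simp; linarith
      have h3 : 2 * π * pm b * (u - (X : ℂ)).re < 0 := mul_neg_of_pos_of_neg (by positivity) this
      linarith
    simp only [Pi.div_apply]
    rw [show u - I * pm b - X = u - X - I * pm b by ring, hs]
    field_simp
end QD

def LI (k : ℂ → ℂ) (c η : ℝ) : ℂ := ∫ t in Set.Iic c, k ((t : ℂ) + (η : ℂ) * I)
def RI (k : ℂ → ℂ) (c η : ℝ) : ℂ := ∫ t in Set.Ioi c, k ((t : ℂ) + (η : ℂ) * I)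
def VI (k : ℂ → ℂ) (c η₁ η₂ : ℝ) : ℂ := I * ∫ s in η₁..η₂, k ((c : ℂ) + (s : ℂ) * I)
def Zint (k : ℂ → ℂ) (c η₁ η₂ : ℝ) : ℂ := LI k c η₁ + VI k c η₁ η₂ + RI k c η₂

def LDec (k : ℂ → ℂ) (c η η' : ℝ) : Prop :=
  ∃ M l : ℝ, 0 < l ∧ ∀ y : ℂ, y.re ≤ c → y.im ∈ Set.uIcc η η' → ‖k y‖ ≤ M * Real.exp (l * y.re)
def RDec (k : ℂ → ℂ) (c η η' : ℝ) : Prop :=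
  ∃ M l : ℝ, 0 < l ∧ ∀ y : ℂ, c ≤ y.re → y.im ∈ Set.uIcc η η' → ‖k y‖ ≤ M * Real.exp (-(l * y.re))
def LDiff (k : ℂ → ℂ) (c η η' : ℝ) : Prop :=
  ∀ y : ℂ, y.re ≤ c → y.im ∈ Set.uIcc η η' → DifferentiableAt ℂ k y
def RDiff (k : ℂ → ℂ) (c η η' : ℝ) : Prop :=
  ∀ y : ℂ, c ≤ y.re → y.im ∈ Set.uIcc η η' → DifferentiableAt ℂ k y

lemma line_re (t η : ℝ) : ((t : ℂ) + (η : ℂ) * I).re = t := by simp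
lemma line_im (t η : ℝ) : ((t : ℂ) + (η : ℂ) * I).im = η := by simp

lemma contAt_line {k : ℂ → ℂ} {t η : ℝ} (h : ContinuousAt k ((t : ℂ) + (η : ℂ) * I)) :
    ContinuousAt (fun t : ℝ => k ((t : ℂ) + (η : ℂ) * I)) t :=
  ContinuousAt.comp (f := fun t : ℝ => (t : ℂ) + (η : ℂ) * I) h (by fun_prop)

lemma contAt_vert {k : ℂ → ℂ} {t η : ℝ} (h : ContinuousAt k ((t : ℂ) + (η : ℂ) * I)) :
    ContinuousAt (fun s : ℝ => k ((t : ℂ) + (s : ℂ) * I)) η :=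
  ContinuousAt.comp (f := fun s : ℝ => (t : ℂ) + (s : ℂ) * I) h (by fun_prop)

lemma integrableOn_left {k : ℂ → ℂ} {c η M l : ℝ} (hl : 0 < l)
    (hc : ∀ t ≤ c, ContinuousAt k ((t : ℂ) + (η : ℂ) * I))
    (hb : ∀ t ≤ c, ‖k ((t : ℂ) + (η : ℂ) * I)‖ ≤ M * Real.exp (l * t)) :
    IntegrableOn (fun t : ℝ => k ((t : ℂ) + (η : ℂ) * I)) (Set.Iic c) := by
  have hi : IntegrableOn (fun t : ℝ => M * Real.exp (l * t)) (Set.Iic c) :=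
    (integrableOn_exp_mul_Iic hl c).const_mul M
  refine Integrable.mono' hi ?_ ?_
  · refine ContinuousOn.aestronglyMeasurable (fun t ht => ?_) measurableSet_Iic
    exact (contAt_line (hc t ht)).continuousWithinAt
  · exact (ae_restrict_mem measurableSet_Iic).mono fun t ht => hb t ht

lemma integrableOn_right {k : ℂ → ℂ} {c η M l : ℝ} (hl : 0 < l)
    (hc : ∀ t, c ≤ t → ContinuousAt k ((t : ℂ) + (η : ℂ) * I))
    (hb : ∀ t, c ≤ t → ‖k ((t : ℂ) + (η : ℂ) * I)‖ ≤ M * Real.exp (-(l * t))) :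
    IntegrableOn (fun t : ℝ => k ((t : ℂ) + (η : ℂ) * I)) (Set.Ioi c) := by
  have hi : IntegrableOn (fun t : ℝ => M * Real.exp (-(l * t))) (Set.Ioi c) := by
    have := (exp_neg_integrableOn_Ioi c hl).const_mul M
    simp only [neg_mul] at this
    exact this
  refine Integrable.mono' hi ?_ ?_
  · refine ContinuousOn.aestronglyMeasurable (fun t ht => ?_) measurableSet_Ioi
    exact (contAt_line (hc t (le_of_lt ht))).continuousWithinAt
  · exact (ae_restrict_mem measurableSet_Ioi).mono fun t ht => hb t (le_of_lt ht)

lemma LDec.integrableOn {k : ℂ → ℂ} {c η η' s : ℝ} (h : LDec k c η η') (hd : LDiff k c η η')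
    (hs : s ∈ Set.uIcc η η') : IntegrableOn (fun t : ℝ => k ((t : ℂ) + (s : ℂ) * I)) (Set.Iic c) := by
  obtain ⟨M, l, hl, hb⟩ := h
  refine integrableOn_left (M := M) hl (fun t ht => (hd _ (by simpa using ht) (by simpa using hs)).continuousAt)
    fun t ht => ?_
  simpa using hb (t + s * I) (by simpa using ht) (by simpa using hs)

lemma RDec.integrableOn {k : ℂ → ℂ} {c η η' s : ℝ} (h : RDec k c η η') (hd : RDiff k c η η')
    (hs : s ∈ Set.uIcc η η') : IntegrableOn (fun t : ℝ => k ((t : ℂ) + (s : ℂ) * I)) (Set.Ioi c) := by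
  obtain ⟨M, l, hl, hb⟩ := h
  refine integrableOn_right (M := M) hl (fun t ht => (hd _ (by simpa using ht) (by simpa using hs)).continuousAt)
    fun t ht => ?_
  simpa using hb (t + s * I) (by simpa using ht) (by simpa using hs)

lemma left_shift_gen {k : ℂ → ℂ} {c η η' : ℝ} (hd : LDiff k c η η')
    (hi : IntegrableOn (fun t : ℝ => k ((t : ℂ) + (η' : ℂ) * I)) (Set.Iic c))
    (hv : Tendsto (fun T : ℝ => ∫ s in η..η', k (((-T : ℝ) : ℂ) + (s : ℂ) * I)) atTop (𝓝 0)) :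
    Tendsto (fun T : ℝ => ∫ t in (-T)..c, k ((t : ℂ) + (η : ℂ) * I)) atTop
      (𝓝 (LI k c η' - VI k c η η')) := by
  have l1 := intervalIntegral_tendsto_integral_Iic c hi tendsto_neg_atTop_atBot
  have l2 := (l1.sub_const (VI k c η η')).add (hv.const_mul I)
  rw [mul_zero, add_zero] at l2
  refine l2.congr' ?_
  filter_upwards [eventually_ge_atTop (-c)] with T hT
  have := Complex.integral_boundary_rect_eq_zero_of_differentiableOn k (⟨-T, η⟩ : ℂ) ⟨c, η'⟩ (by
    intro w hw
    rw [Complex.mem_reProdIm] at hw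
    have h1 := hw.1
    rw [Set.uIcc_of_le (by simp; linarith)] at h1
    exact (hd w h1.2 hw.2).differentiableWithinAt)
  simp only [smul_eq_mul] at this
  unfold VI
  linear_combination -this

lemma right_shift_gen {k : ℂ → ℂ} {c η η' : ℝ} (hd : RDiff k c η η')
    (hi : IntegrableOn (fun t : ℝ => k ((t : ℂ) + (η' : ℂ) * I)) (Set.Ioi c))
    (hv : Tendsto (fun T : ℝ => ∫ s in η..η', k ((T : ℂ) + (s : ℂ) * I)) atTop (𝓝 0)) :
    Tendsto (fun T : ℝ => ∫ t in c..T, k ((t : ℂ) + (η : ℂ) * I)) atTop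
      (𝓝 (RI k c η' + VI k c η η')) := by
  have l1 := intervalIntegral_tendsto_integral_Ioi c hi tendsto_id
  have l2 := (l1.add_const (VI k c η η')).sub (hv.const_mul I)
  rw [mul_zero, sub_zero] at l2
  refine l2.congr' ?_
  filter_upwards [eventually_ge_atTop c] with T hT
  have := Complex.integral_boundary_rect_eq_zero_of_differentiableOn k (⟨c, η⟩ : ℂ) ⟨T, η'⟩ (by
    intro w hw
    rw [Complex.mem_reProdIm] at hw
    have h1 := hw.1
    rw [Set.uIcc_of_le (by simpa using hT)] at h1
    exact (hd w h1.1 hw.2).differentiableWithinAt)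
  simp only [smul_eq_mul] at this
  unfold VI
  simp only [id]
  linear_combination -this

lemma LDec.vert {k : ℂ → ℂ} {c η η' : ℝ} (h : LDec k c η η') :
    Tendsto (fun T : ℝ => ∫ s in η..η', k (((-T : ℝ) : ℂ) + (s : ℂ) * I)) atTop (𝓝 0) := by
  obtain ⟨M, l, hl, hb⟩ := h
  rw [tendsto_zero_iff_norm_tendsto_zero]
  have lim : Tendsto (fun T : ℝ => M * Real.exp (l * (-T)) * |η' - η|) atTop (𝓝 (M * 0 * |η' - η|)) := by
    refine Tendsto.mul_const _ (Tendsto.const_mul _ ?_)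
    exact Real.tendsto_exp_atBot.comp (Tendsto.const_mul_atBot hl tendsto_neg_atTop_atBot)
  rw [mul_zero, zero_mul] at lim
  refine squeeze_zero' (Eventually.of_forall fun _ => norm_nonneg _) ?_ lim
  filter_upwards [eventually_ge_atTop (-c)] with T hT
  apply intervalIntegral.norm_integral_le_of_norm_le_const
  intro s hs
  have := hb (((-T : ℝ) : ℂ) + (s : ℂ) * I) (by rw [line_re]; linarith) (by
    rw [line_im]; exact Set.uIoc_subset_uIcc hs)
  rwa [line_re] at this

lemma RDec.vert {k : ℂ → ℂ} {c η η' : ℝ} (h : RDec k c η η') :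
    Tendsto (fun T : ℝ => ∫ s in η..η', k ((T : ℂ) + (s : ℂ) * I)) atTop (𝓝 0) := by
  obtain ⟨M, l, hl, hb⟩ := h
  rw [tendsto_zero_iff_norm_tendsto_zero]
  have lim : Tendsto (fun T : ℝ => M * Real.exp (-(l * T)) * |η' - η|) atTop (𝓝 (M * 0 * |η' - η|)) := by
    refine Tendsto.mul_const _ (Tendsto.const_mul _ ?_)
    exact Real.tendsto_exp_atBot.comp (tendsto_neg_atTop_atBot.comp (Tendsto.const_mul_atTop hl tendsto_id))
  rw [mul_zero, zero_mul] at lim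
  refine squeeze_zero' (Eventually.of_forall fun _ => norm_nonneg _) ?_ lim
  filter_upwards [eventually_ge_atTop c] with T hT
  apply intervalIntegral.norm_integral_le_of_norm_le_const
  intro s hs
  have := hb ((T : ℂ) + (s : ℂ) * I) (by rw [line_re]; linarith) (by
    rw [line_im]; exact Set.uIoc_subset_uIcc hs)
  rwa [line_re] at this

lemma left_shift {k : ℂ → ℂ} {c η η' : ℝ} (h : LDec k c η η') (hd : LDiff k c η η') :
    LI k c η = LI k c η' - VI k c η η' := by
  have t1 := left_shift_gen hd (h.integrableOn hd Set.right_mem_uIcc) h.vert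
  have t2 := intervalIntegral_tendsto_integral_Iic c (h.integrableOn hd Set.left_mem_uIcc) tendsto_neg_atTop_atBot
  exact tendsto_nhds_unique t2 t1

lemma right_shift {k : ℂ → ℂ} {c η η' : ℝ} (h : RDec k c η η') (hd : RDiff k c η η') :
    RI k c η = RI k c η' + VI k c η η' := by
  have t1 := right_shift_gen hd (h.integrableOn hd Set.right_mem_uIcc) h.vert
  have t2 := intervalIntegral_tendsto_integral_Ioi c (h.integrableOn hd Set.left_mem_uIcc) tendsto_id
  exact tendsto_nhds_unique t2 t1

lemma VI_add {k : ℂ → ℂ} {c : ℝ} (hc : ∀ s : ℝ, ContinuousAt k ((c : ℂ) + (s : ℂ) * I)) (a b d : ℝ) :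
    VI k c a b + VI k c b d = VI k c a d := by
  have hcont : Continuous fun s : ℝ => k ((c : ℂ) + (s : ℂ) * I) :=
    continuous_iff_continuousAt.mpr fun s => contAt_vert (hc s)
  unfold VI
  rw [← mul_add, intervalIntegral.integral_add_adjacent_intervals (hcont.intervalIntegrable _ _)
    (hcont.intervalIntegrable _ _)]

lemma VI_symm (k : ℂ → ℂ) (c a b : ℝ) : VI k c a b = - VI k c b a := by
  unfold VI; rw [intervalIntegral.integral_symm]; ring

lemma Zint_heights {k : ℂ → ℂ} {c η₁ η₂ η₁' η₂' : ℝ}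
    (hc : ∀ s : ℝ, ContinuousAt k ((c : ℂ) + (s : ℂ) * I))
    (hl : LDec k c η₁ η₁') (hld : LDiff k c η₁ η₁') (hr : RDec k c η₂ η₂') (hrd : RDiff k c η₂ η₂') :
    Zint k c η₁ η₂ = Zint k c η₁' η₂' := by
  unfold Zint
  rw [left_shift hl hld, right_shift hr hrd]
  have e1 := VI_add hc η₁' η₁ η₂
  have e2 := VI_add hc η₁' η₂ η₂'
  have e3 := VI_symm k c η₁' η₁
  linear_combination e1 + e2 - e3

lemma Zint_corner {k : ℂ → ℂ} {c c' η₁ η₂ : ℝ} (hcc : c' ≤ c)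
    (hl : IntegrableOn (fun t : ℝ => k ((t : ℂ) + (η₁ : ℂ) * I)) (Set.Iic c))
    (hr : IntegrableOn (fun t : ℝ => k ((t : ℂ) + (η₂ : ℂ) * I)) (Set.Ioi c'))
    (hd : LDiff k c η₁ η₂) :
    Zint k c η₁ η₂ = Zint k c' η₁ η₂ := by
  have h1 : LI k c η₁ - LI k c' η₁ = ∫ t in c'..c, k ((t : ℂ) + (η₁ : ℂ) * I) :=
    intervalIntegral.integral_Iic_sub_Iic (hl.mono_set (Set.Iic_subset_Iic.mpr hcc)) hl
  have h2 : RI k c' η₂ - RI k c η₂ = ∫ t in c'..c, k ((t : ℂ) + (η₂ : ℂ) * I) :=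
    intervalIntegral.integral_Ioi_sub_Ioi hr hcc
  have := Complex.integral_boundary_rect_eq_zero_of_differentiableOn k (⟨c', η₁⟩ : ℂ) ⟨c, η₂⟩ (by
    intro w hw
    rw [Complex.mem_reProdIm] at hw
    have h1 := hw.1
    rw [Set.uIcc_of_le (by simpa using hcc)] at h1
    exact (hd w h1.2 hw.2).differentiableWithinAt)
  simp only [smul_eq_mul] at this
  unfold Zint VI
  linear_combination h1 - h2 + this

lemma Zint_congr {k k' : ℂ → ℂ} {c η₁ η₂ : ℝ} (h : ∀ y : ℂ, y.re ≤ c ∨ y.im = η₂ → k y = k' y) :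
    Zint k c η₁ η₂ = Zint k' c η₁ η₂ := by
  unfold Zint LI VI RI
  congr 1
  · congr 1
    · apply setIntegral_congr_fun measurableSet_Iic
      intro t ht
      exact h _ (Or.inl (by simpa using ht))
    · congr 1
      apply intervalIntegral.integral_congr
      intro s _
      exact h _ (Or.inl (by simp))
  · apply setIntegral_congr_fun measurableSet_Ioi
    intro t ht
    exact h _ (Or.inr (by simp))

lemma Zint_translate (k : ℂ → ℂ) (c η₁ η₂ p : ℝ) :
    Zint (fun y => k (y - I * p)) c η₁ η₂ = Zint k c (η₁ - p) (η₂ - p) := by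
  have e : ∀ t s : ℝ, (t : ℂ) + (s : ℂ) * I - I * p = (t : ℂ) + ((s - p : ℝ) : ℂ) * I := by
    intro t s; push_cast; ring
  unfold Zint LI VI RI
  simp only [e]
  rw [intervalIntegral.integral_comp_sub_right (fun s : ℝ => k ((c : ℂ) + (s : ℂ) * I)) p]

lemma Zint_lin {k₁ k₂ : ℂ → ℂ} {c η₁ η₂ : ℝ} (a : ℂ)
    (h1 : IntegrableOn (fun t : ℝ => k₁ ((t : ℂ) + (η₁ : ℂ) * I)) (Set.Iic c))
    (h1' : IntegrableOn (fun t : ℝ => k₂ ((t : ℂ) + (η₁ : ℂ) * I)) (Set.Iic c))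
    (h2 : IntegrableOn (fun t : ℝ => k₁ ((t : ℂ) + (η₂ : ℂ) * I)) (Set.Ioi c))
    (h2' : IntegrableOn (fun t : ℝ => k₂ ((t : ℂ) + (η₂ : ℂ) * I)) (Set.Ioi c))
    (h3 : ∀ s : ℝ, ContinuousAt k₁ ((c : ℂ) + (s : ℂ) * I))
    (h3' : ∀ s : ℝ, ContinuousAt k₂ ((c : ℂ) + (s : ℂ) * I)) :
    Zint (fun y => a * (k₁ y - k₂ y)) c η₁ η₂ = a * (Zint k₁ c η₁ η₂ - Zint k₂ c η₁ η₂) := by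
  have c1 : Continuous fun s : ℝ => k₁ ((c : ℂ) + (s : ℂ) * I) :=
    continuous_iff_continuousAt.mpr fun s => contAt_vert (h3 s)
  have c2 : Continuous fun s : ℝ => k₂ ((c : ℂ) + (s : ℂ) * I) :=
    continuous_iff_continuousAt.mpr fun s => contAt_vert (h3' s)
  unfold Zint LI VI RI
  rw [integral_const_mul, integral_const_mul, intervalIntegral.integral_const_mul,
    integral_sub h1 h1', integral_sub h2 h2',
    intervalIntegral.integral_sub (c1.intervalIntegrable _ _) (c2.intervalIntegrable _ _)]
  ring

/-- the kernel -/
def kx (b : ℝ) (f : ℂ → ℂ) (x y : ℂ) : ℂ :=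
  Complex.exp (-(2 * π * I * x * y) - I * π * y ^ 2) * ph b f y

lemma kx_norm (b : ℝ) (f : ℂ → ℂ) (x y : ℂ) :
    ‖kx b f x y‖ = Real.exp (2 * π * (x.re * y.im + (x.im + y.im) * y.re)) * ‖ph b f y‖ := by
  unfold kx
  rw [norm_mul, Complex.norm_exp]
  congr 2
  have : -(2 * π * I * x * y) - I * π * y ^ 2 = ((π : ℝ) : ℂ) * (-(2 * (I * (x * y))) - I * y ^ 2) := by ring
  rw [this, Complex.re_ofReal_mul]
  simp [sq]; ring

namespace QD
variable {b : ℝ} {f : ℂ → ℂ}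

lemma Qpos (h : QD b f) : 0 < b + b⁻¹ := add_pos h.hb (inv_pos.mpr h.hb)

lemma p_lt_Q (h : QD b f) : pm b < b + b⁻¹ := by
  have := pm_add_qm b
  have := h.qpos
  linarith

lemma kx_diff (h : QD b f) (x : ℂ) {y : ℂ} (hy : y.re ≠ 0 ∨ y.im < 0) : DifferentiableAt ℂ (kx b f x) y := by
  unfold kx
  exact DifferentiableAt.mul (by fun_prop) (h.ph_diff hy)

lemma kx_left (h : QD b f) {c κ : ℝ} (hc : c < 0) (hκ : 0 < κ) {A : ℝ} (hA : 0 ≤ A) :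
    ∃ M > 0, ∀ (x y : ℂ) (σ : ℝ), ‖x‖ ≤ A → y.re ≤ c → -(b + b⁻¹) + κ ≤ y.im → y.im ≤ pm b - κ →
      σ ≤ x.im + y.im → ‖kx b f x y‖ ≤ M * Real.exp (2 * π * σ * y.re) := by
  obtain ⟨M, hM, hb⟩ := h.left_bd (a := -c) (by linarith) hκ
  refine ⟨M * Real.exp (2 * π * (A * (b + b⁻¹))), by positivity, fun x y σ hx hy h1 h2 hs => ?_⟩
  have hQ := h.Qpos
  have hpQ := h.p_lt_Q
  have hb1 := hb y h1 h2 (by linarith)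
  rw [kx_norm]
  have e1 : x.re * y.im ≤ A * (b + b⁻¹) := by
    calc x.re * y.im ≤ |x.re * y.im| := le_abs_self _
      _ = |x.re| * |y.im| := abs_mul _ _
      _ ≤ A * (b + b⁻¹) := by
        gcongr
        · exact (Complex.abs_re_le_norm x).trans hx
        · rw [abs_le]; constructor <;> linarith
  have e2 : (x.im + y.im) * y.re ≤ σ * y.re := by
    apply mul_le_mul_of_nonpos_right hs; linarith
  calc _ ≤ Real.exp (2 * π * (A * (b + b⁻¹) + σ * y.re)) * M := by gcongr
    _ = _ := by rw [mul_add, Real.exp_add]; ring_nf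

lemma kx_right_aux (h : QD b f) {M A C σ : ℝ} {x y : ℂ} (hA : 0 ≤ A) (hC : 0 ≤ C)
    (hph : ‖ph b f y‖ ≤ M * Real.exp (-2 * π * (y.re * (y.im + (b + b⁻¹) / 2))))
    (hx : ‖x‖ ≤ A) (hy : -C ≤ y.re) (hi : |y.im| ≤ b + b⁻¹) (hs0 : 0 ≤ σ) (hs : σ ≤ (b + b⁻¹) / 2 - x.im) :
    ‖kx b f x y‖ ≤ M * Real.exp (2 * π * (A * (b + b⁻¹) + ((b + b⁻¹) / 2 + A) * C)) *
      Real.exp (-(2 * π * σ * y.re)) := by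
  have hQ := h.Qpos
  rw [kx_norm]
  have hM : 0 ≤ M := by
    have := (norm_nonneg _).trans hph
    by_contra hneg
    push Not at hneg
    have := mul_neg_of_neg_of_pos hneg (Real.exp_pos (-2 * π * (y.re * (y.im + (b + b⁻¹) / 2))))
    linarith
  have e1 : x.re * y.im ≤ A * (b + b⁻¹) := by
    calc x.re * y.im ≤ |x.re * y.im| := le_abs_self _
      _ = |x.re| * |y.im| := abs_mul _ _
      _ ≤ A * (b + b⁻¹) := by
        gcongr
        exact (Complex.abs_re_le_norm x).trans hx
  have hxi : -A ≤ x.im := by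
    have := (Complex.abs_im_le_norm x).trans hx
    exact (abs_le.mp this).1
  have e2 : -(((b + b⁻¹) / 2 - σ - x.im) * y.re) ≤ ((b + b⁻¹) / 2 + A) * C := by
    have g1 : ((b + b⁻¹) / 2 - σ - x.im) * (-y.re) ≤ ((b + b⁻¹) / 2 - σ - x.im) * C :=
      mul_le_mul_of_nonneg_left (by linarith) (by linarith)
    have g2 : ((b + b⁻¹) / 2 - σ - x.im) * C ≤ ((b + b⁻¹) / 2 + A) * C :=
      mul_le_mul_of_nonneg_right (by linarith) hC
    linarith
  calc _ ≤ Real.exp (2 * π * (x.re * y.im + (x.im + y.im) * y.re)) *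
        (M * Real.exp (-2 * π * (y.re * (y.im + (b + b⁻¹) / 2)))) := by gcongr
    _ = M * Real.exp (2 * π * (x.re * y.im + -(((b + b⁻¹) / 2 - σ - x.im) * y.re)) + -(2 * π * σ * y.re)) := by
        rw [mul_left_comm, ← Real.exp_add]; congr 2; ring
    _ ≤ M * Real.exp (2 * π * (A * (b + b⁻¹) + ((b + b⁻¹) / 2 + A) * C) + -(2 * π * σ * y.re)) := by
        gcongr
    _ = _ := by rw [Real.exp_add]; ring

lemma kx_right (h : QD b f) (c : ℝ) {κ : ℝ} (hκ : 0 < κ) {A : ℝ} (hA : 0 ≤ A) :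
    ∃ M > 0, ∀ (x y : ℂ) (σ : ℝ), ‖x‖ ≤ A → c ≤ y.re → -(b + b⁻¹) + κ ≤ y.im → y.im ≤ -κ → 0 ≤ σ →
      σ ≤ (b + b⁻¹) / 2 - x.im → ‖kx b f x y‖ ≤ M * Real.exp (-(2 * π * σ * y.re)) := by
  obtain ⟨M, hM, hb⟩ := h.strip_right hκ |c|
  refine ⟨M * Real.exp (2 * π * (A * (b + b⁻¹) + ((b + b⁻¹) / 2 + A) * |c|)), by positivity,
    fun x y σ hx hy h1 h2 hs0 hs => ?_⟩
  have := neg_abs_le c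
  exact h.kx_right_aux hA (abs_nonneg c) (hb y h1 h2 (by linarith)) hx (by linarith)
    (by rw [abs_le]; constructor <;> linarith [h.Qpos]) hs0 hs

lemma kx_LDiff (h : QD b f) (x : ℂ) {c : ℝ} (hc : c < 0) (η η' : ℝ) : LDiff (kx b f x) c η η' :=
  fun y hy _ => h.kx_diff x (Or.inl (by linarith : y.re < 0).ne)

lemma kx_RDiff (h : QD b f) (x : ℂ) (c : ℝ) {η η' : ℝ} (hη : η < 0) (hη' : η' < 0) : RDiff (kx b f x) c η η' :=
  fun y _ hi => h.kx_diff x (Or.inr (hi.2.trans_lt (max_lt hη hη')))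

lemma kx_LDec (h : QD b f) {x : ℂ} {c : ℝ} (hc : c < 0) {η η' : ℝ} (h1 : -(b + b⁻¹) < η) (h1' : -(b + b⁻¹) < η')
    (h2 : η < pm b) (h2' : η' < pm b) (h3 : -x.im < η) (h3' : -x.im < η') : LDec (kx b f x) c η η' := by
  have m1 : -(b + b⁻¹) < min η η' := lt_min h1 h1'
  have m2 : max η η' < pm b := max_lt h2 h2'
  have m3 : -x.im < min η η' := lt_min h3 h3'
  set κ := min (min η η' + (b + b⁻¹)) (pm b - max η η') with hκ
  have k1 : κ ≤ min η η' + (b + b⁻¹) := min_le_left _ _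
  have k2 : κ ≤ pm b - max η η' := min_le_right _ _
  have k0 : 0 < κ := lt_min (by linarith) (by linarith)
  obtain ⟨M, hM, hb⟩ := h.kx_left hc k0 (norm_nonneg x)
  refine ⟨M, 2 * π * (x.im + min η η'), by have := Real.pi_pos; have : 0 < x.im + min η η' := by linarith
                                           positivity, fun y hy hi => ?_⟩
  exact hb x y _ le_rfl hy (by linarith [hi.1]) (by linarith [hi.2]) (by linarith [hi.1])

lemma kx_RDec (h : QD b f) {x : ℂ} (c : ℝ) {η η' : ℝ} (h1 : -(b + b⁻¹) < η) (h1' : -(b + b⁻¹) < η')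
    (h2 : η < 0) (h2' : η' < 0) (h3 : x.im < (b + b⁻¹) / 2) : RDec (kx b f x) c η η' := by
  have m1 : -(b + b⁻¹) < min η η' := lt_min h1 h1'
  have m2 : max η η' < 0 := max_lt h2 h2'
  set κ := min (min η η' + (b + b⁻¹)) (- max η η') with hκ
  have k1 : κ ≤ min η η' + (b + b⁻¹) := min_le_left _ _
  have k2 : κ ≤ - max η η' := min_le_right _ _
  have k0 : 0 < κ := lt_min (by linarith) (by linarith)
  obtain ⟨M, hM, hb⟩ := h.kx_right c k0 (norm_nonneg x)
  refine ⟨M, 2 * π * ((b + b⁻¹) / 2 - x.im), by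
    have := Real.pi_pos
    have : 0 < (b + b⁻¹) / 2 - x.im := by linarith
    positivity, fun y hy hi => ?_⟩
  exact hb x y _ le_rfl hy (by linarith [hi.1]) (by linarith [hi.2]) (by linarith) (by linarith)

end QD

/-- the Fourier integral on the Z-contour -/
def Fz (b : ℝ) (f : ℂ → ℂ) (η : ℝ) (x : ℂ) : ℂ := Zint (kx b f x) (-1) ((b + b⁻¹) / 2) η

namespace QD
variable {b : ℝ} {f : ℂ → ℂ}

lemma halfQ_lt_p (h : QD b f) : (b + b⁻¹) / 2 < pm b := by
  have := pm_add_qm b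
  have := h.q_lt_p
  linarith

lemma kx_cont_vert (h : QD b f) (x : ℂ) {c : ℝ} (hc : c < 0) (s : ℝ) :
    ContinuousAt (kx b f x) ((c : ℂ) + (s : ℂ) * I) :=
  (h.kx_diff x (Or.inl (by simpa using hc.ne))).continuousAt

lemma kx_int_left (h : QD b f) {x : ℂ} {c : ℝ} (hc : c < 0) {η : ℝ} (h1 : -(b + b⁻¹) < η)
    (h2 : η < pm b) (h3 : -x.im < η) :
    IntegrableOn (fun t : ℝ => kx b f x ((t : ℂ) + (η : ℂ) * I)) (Set.Iic c) :=
  (h.kx_LDec hc h1 h1 h2 h2 h3 h3).integrableOn (h.kx_LDiff x hc η η) Set.left_mem_uIcc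

lemma kx_int_right (h : QD b f) {x : ℂ} (c : ℝ) {η : ℝ} (h1 : -(b + b⁻¹) < η)
    (h2 : η < 0) (h3 : x.im < (b + b⁻¹) / 2) :
    IntegrableOn (fun t : ℝ => kx b f x ((t : ℂ) + (η : ℂ) * I)) (Set.Ioi c) :=
  (h.kx_RDec c h1 h1 h2 h2 h3).integrableOn (h.kx_RDiff x c h2 h2) Set.left_mem_uIcc

lemma p'_bd (h : QD b f) {p : ℝ} (hp : p = b ∨ p = b⁻¹) : 0 < p ∧ p ≤ pm b := by
  have := h.hb
  rcases hp with rfl | rfl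
  · exact ⟨this, le_max_left _ _⟩
  · exact ⟨inv_pos.mpr this, le_max_right _ _⟩

lemma Fz_shift (h : QD b f) {p : ℝ} (hp : p = b ∨ p = b⁻¹) {η : ℝ} (hη : -qm b < η) (hη0 : η < 0) {x : ℂ}
    (hx1 : -((b + b⁻¹) / 2) < x.im - p) (hx2 : x.im < (b + b⁻¹) / 2) :
    Fz b f η (x - I * p) = (1 + Complex.exp (2 * π * p * x - I * π * p ^ 2)) * Fz b f η x := by
  obtain ⟨hp0, hpm⟩ := h.p'_bd hp
  have hQ := h.Qpos
  have hpq := pm_add_qm b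
  have hq := h.qpos
  have hpp := h.ppos
  have hQp := h.halfQ_lt_p
  have key : Fz b f η x = Complex.exp (I * π * p ^ 2 - 2 * π * x * p) * (Fz b f η (x - I * p) - Fz b f η x) := by
    have hxi : (x - I * p).im = x.im - p := by simp
    unfold Fz
    rw [← Zint_lin]
    · rw [Zint_heights (η₁' := (b + b⁻¹) / 2 - p) (η₂' := η - p)]
      · rw [← Zint_translate]
        apply Zint_congr
        intro y hy
        unfold kx
        rw [h.ph_shift hp (by
          rcases hy with hy | hy
          · left; linarith
          · right; linarith)]
        have e1 : Complex.exp (-(2 * π * I * x * (y - I * p)) - I * π * (y - I * p) ^ 2) =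
            Complex.exp (I * π * p ^ 2 - 2 * π * x * p) * Complex.exp (-(2 * π * I * (x - I * p) * y) - I * π * y ^ 2) := by
          rw [← Complex.exp_add]; congr 1; ring_nf; simp only [I_sq, Complex.I_pow_three]; ring
        have e2 : Complex.exp (-(2 * π * I * x * y) - I * π * y ^ 2) =
            Complex.exp (-(2 * π * I * (x - I * p) * y) - I * π * y ^ 2) * Complex.exp (2 * π * p * y) := by
          rw [← Complex.exp_add]; congr 1; ring_nf; simp only [I_sq]; ring
        rw [e1, e2]; ring
      · exact fun s => h.kx_cont_vert x (by norm_num) s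
      · exact h.kx_LDec (by norm_num) (by linarith) (by linarith) (by linarith) (by linarith) (by linarith) (by linarith)
      · exact h.kx_LDiff x (by norm_num) _ _
      · exact h.kx_RDec _ (by linarith) (by linarith) (by linarith) (by linarith) (by linarith)
      · exact h.kx_RDiff x _ (by linarith) (by linarith)
    · exact h.kx_int_left (by norm_num) (by linarith) hQp (by rw [hxi]; linarith)
    · exact h.kx_int_left (by norm_num) (by linarith) hQp (by linarith)
    · exact h.kx_int_right _ (by linarith) (by linarith) (by rw [hxi]; linarith)
    · exact h.kx_int_right _ (by linarith) (by linarith) (by linarith)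
    · exact fun s => h.kx_cont_vert _ (by norm_num) s
    · exact fun s => h.kx_cont_vert _ (by norm_num) s
  have e3 : Complex.exp (2 * π * p * x - I * π * p ^ 2) * Complex.exp (I * π * p ^ 2 - 2 * π * x * p) = 1 := by
    rw [← Complex.exp_add, ← Complex.exp_zero]; congr 1; ring
  linear_combination (Complex.exp (2 * π * p * x - I * π * p ^ 2)) * (-1 : ℂ) * key - (Fz b f η (x - I * p) - Fz b f η x) * e3
end QD

lemma diffAt_integral {μ : Measure ℝ} {k k' : ℂ → ℝ → ℂ} {x0 : ℂ} {r : ℝ} (hr : 0 < r) {B : ℝ → ℝ}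
    (hB : Integrable B μ) (hm : ∀ x, AEStronglyMeasurable (k x) μ) (hm' : AEStronglyMeasurable (k' x0) μ)
    (hk : ∀ t x, HasDerivAt (fun x => k x t) (k' x t) x)
    (hb : ∀ᵐ t ∂μ, ∀ x ∈ Metric.ball x0 (2 * r), ‖k x t‖ ≤ B t) :
    DifferentiableAt ℂ (fun x => ∫ t, k x t ∂μ) x0 := by
  have hs : Metric.ball x0 (r / 2) ∈ 𝓝 x0 := Metric.ball_mem_nhds _ (by linarith)
  refine (hasDerivAt_integral_of_dominated_loc_of_deriv_le (F := k) (F' := k') (bound := fun t => B t / r) hs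
    (Eventually.of_forall hm) ?_ hm' ?_ (hB.div_const r) ?_).2.differentiableAt
  · refine hB.mono' (hm x0) ?_
    filter_upwards [hb] with t ht
    exact ht x0 (Metric.mem_ball_self (by linarith))
  · filter_upwards [hb] with t ht x hx
    rw [← (hk t x).deriv]
    apply Complex.norm_deriv_le_of_forall_mem_sphere_norm_le hr
    · exact (Differentiable.diffContOnCl fun x => (hk t x).differentiableAt)
    · intro z hz
      apply ht
      rw [Metric.mem_ball] at hx ⊢
      rw [Metric.mem_sphere] at hz
      have := dist_triangle z x x0
      linarith
  · exact Eventually.of_forall fun t x _ => hk t x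

lemma kx_hasDeriv_x (b : ℝ) (f : ℂ → ℂ) (y x : ℂ) :
    HasDerivAt (fun x => kx b f x y) (-(2 * π * I * y) * kx b f x y) x := by
  unfold kx
  have h1 : HasDerivAt (fun x : ℂ => -(2 * π * I * x * y) - I * π * y ^ 2) (-(2 * π * I * y)) x := by
    have := (((hasDerivAt_id x).const_mul (2 * π * I)).mul_const y).neg.sub_const (I * π * y ^ 2)
    simpa using this
  refine (h1.cexp.mul_const (ph b f y)).congr_deriv ?_
  ring

namespace QD
variable {b : ℝ} {f : ℂ → ℂ}

lemma Fz_diff (h : QD b f) {η : ℝ} (hη : -qm b < η) (hη0 : η < 0) {x0 : ℂ}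
    (hx : |x0.im| < (b + b⁻¹) / 2) : DifferentiableAt ℂ (Fz b f η) x0 := by
  have hQ := h.Qpos
  have hpq := pm_add_qm b
  have hq := h.qpos
  have hpp := h.ppos
  have hQp := h.halfQ_lt_p
  set σ := ((b + b⁻¹) / 2 - |x0.im|) / 2 with hσ
  have s0 : 0 < σ := by rw [hσ]; linarith
  set A := ‖x0‖ + σ with hA
  have A0 : 0 ≤ A := by positivity
  have hball : ∀ x ∈ Metric.ball x0 (2 * (σ / 2)), ‖x‖ ≤ A ∧ σ ≤ (b + b⁻¹) / 2 - |x.im| := by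
    intro x hxb
    rw [Metric.mem_ball, dist_eq_norm] at hxb
    have e1 : ‖x‖ ≤ ‖x0‖ + ‖x - x0‖ := by
      have := norm_add_le x0 (x - x0); simpa using this
    have e2 : |x.im| ≤ |x0.im| + ‖x - x0‖ := by
      have g1 := Complex.abs_im_le_norm (x - x0)
      rw [Complex.sub_im] at g1
      have g2 := abs_sub_abs_le_abs_sub x.im x0.im
      linarith
    constructor
    · linarith
    · linarith
  set κ := min ((b + b⁻¹) + η) (min (-η) (pm b - (b + b⁻¹) / 2)) with hκ
  have k1 : κ ≤ (b + b⁻¹) + η := min_le_left _ _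
  have k2 : κ ≤ -η := (min_le_right _ _).trans (min_le_left _ _)
  have k3 : κ ≤ pm b - (b + b⁻¹) / 2 := (min_le_right _ _).trans (min_le_right _ _)
  have k0 : 0 < κ := lt_min (by linarith) (lt_min (by linarith) (by linarith))
  obtain ⟨ML, hML, bL⟩ := h.kx_left (c := -1) (by norm_num) k0 A0
  obtain ⟨MR, hMR, bR⟩ := h.kx_right (-1) k0 A0
  have dL : DifferentiableAt ℂ (fun x => LI (kx b f x) (-1) ((b + b⁻¹) / 2)) x0 := by
    have mm : ∀ x, AEStronglyMeasurable (fun t : ℝ => kx b f x ((t : ℂ) + (((b + b⁻¹) / 2 : ℝ) : ℂ) * I))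
        (volume.restrict (Set.Iic (-1))) := fun x =>
      ContinuousOn.aestronglyMeasurable (fun t ht => (contAt_line (h.kx_diff x (Or.inl (by
        have : t ≤ -1 := ht
        rw [line_re]; linarith))).continuousAt).continuousWithinAt) measurableSet_Iic
    refine diffAt_integral (r := σ / 2) (by linarith)
      (B := fun t => ML * Real.exp (2 * π * σ * t)) ((integrableOn_exp_mul_Iic (by positivity) (-1)).const_mul ML)
      mm ?_ (fun t x => kx_hasDeriv_x b f _ x) ?_
    · exact AEStronglyMeasurable.mul (Continuous.aestronglyMeasurable (by fun_prop)) (mm x0)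
    · refine (ae_restrict_mem measurableSet_Iic).mono fun t ht x hxb => ?_
      obtain ⟨g1, g2⟩ := hball x hxb
      have := bL x ((t : ℂ) + (((b + b⁻¹) / 2 : ℝ) : ℂ) * I) σ g1 (by rw [line_re]; exact ht)
        (by rw [line_im]; linarith) (by rw [line_im]; linarith) (by rw [line_im]; linarith [neg_abs_le x.im])
      rwa [line_re] at this
  have dR : DifferentiableAt ℂ (fun x => RI (kx b f x) (-1) η) x0 := by
    have mm : ∀ x, AEStronglyMeasurable (fun t : ℝ => kx b f x ((t : ℂ) + (η : ℂ) * I))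
        (volume.restrict (Set.Ioi (-1))) := fun x =>
      ContinuousOn.aestronglyMeasurable (fun t ht => (contAt_line (h.kx_diff x (Or.inr (by
        rw [line_im]; linarith))).continuousAt).continuousWithinAt) measurableSet_Ioi
    have hi : IntegrableOn (fun t : ℝ => MR * Real.exp (-(2 * π * σ * t))) (Set.Ioi (-1)) := by
      have := (exp_neg_integrableOn_Ioi (-1) (b := 2 * π * σ) (by positivity)).const_mul MR
      simp only [neg_mul] at this ⊢
      exact this
    refine diffAt_integral (r := σ / 2) (by linarith)
      (B := fun t => MR * Real.exp (-(2 * π * σ * t))) hi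
      mm ?_ (fun t x => kx_hasDeriv_x b f _ x) ?_
    · exact AEStronglyMeasurable.mul (Continuous.aestronglyMeasurable (by fun_prop)) (mm x0)
    · refine (ae_restrict_mem measurableSet_Ioi).mono fun t ht x hxb => ?_
      obtain ⟨g1, g2⟩ := hball x hxb
      have := bR x ((t : ℂ) + (η : ℂ) * I) σ g1 (by rw [line_re]; exact le_of_lt ht)
        (by rw [line_im]; linarith) (by rw [line_im]; linarith) s0.le (by linarith [le_abs_self x.im])
      rwa [line_re] at this
  have dV : DifferentiableAt ℂ (fun x => VI (kx b f x) (-1) ((b + b⁻¹) / 2) η) x0 := by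
    have e : ∀ x, VI (kx b f x) (-1) ((b + b⁻¹) / 2) η =
        I * -∫ s in Set.Ioc η ((b + b⁻¹) / 2), kx b f x (((-1 : ℝ) : ℂ) + (s : ℂ) * I) := by
      intro x
      unfold VI
      rw [intervalIntegral.integral_of_ge (by linarith)]
    simp only [e]
    apply DifferentiableAt.const_mul
    apply DifferentiableAt.fun_neg
    have mm : ∀ x, AEStronglyMeasurable (fun s : ℝ => kx b f x (((-1 : ℝ) : ℂ) + (s : ℂ) * I))
        (volume.restrict (Set.Ioc η ((b + b⁻¹) / 2))) := fun x =>
      (continuous_iff_continuousAt.mpr fun s =>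
        contAt_vert (h.kx_cont_vert x (by norm_num) s)).aestronglyMeasurable
    refine diffAt_integral (r := σ / 2) (by linarith)
      (B := fun t => ML * Real.exp (2 * π * (-(2 * (b + b⁻¹))) * (-1))) (integrable_const _)
      mm ?_ (fun t x => kx_hasDeriv_x b f _ x) ?_
    · exact AEStronglyMeasurable.mul (Continuous.aestronglyMeasurable (by fun_prop)) (mm x0)
    · refine (ae_restrict_mem measurableSet_Ioc).mono fun t ht x hxb => ?_
      obtain ⟨g1, g2⟩ := hball x hxb
      have := bL x (((-1 : ℝ) : ℂ) + (t : ℂ) * I) (-(2 * (b + b⁻¹))) g1 (by rw [line_re])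
        (by rw [line_im]; linarith [ht.1]) (by rw [line_im]; linarith [ht.2])
        (by rw [line_im]; linarith [neg_abs_le x.im, ht.1])
      rwa [line_re] at this
  unfold Fz Zint
  exact (dL.add dV).add dR
end QD

namespace QD
variable {b : ℝ} {f : ℂ → ℂ}

lemma f_ne (h : QD b f) {x : ℂ} (hx : |x.im| < (b + b⁻¹) / 2) : f x ≠ 0 := by
  rw [h.ext x hx, eb_eq]; exact Complex.exp_ne_zero _

lemma f_shift (h : QD b f) {p : ℝ} (hp : p = b ∨ p = b⁻¹) {x : ℂ} (hx2 : x.im < (b + b⁻¹) / 2) :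
    f (x - I * p) = (1 + Complex.exp (2 * π * p * x - I * π * p ^ 2)) * f x := by
  have hb0 : (b : ℂ) ≠ 0 := by exact_mod_cast h.hb.ne'
  have := h.ph_shift hp (y := x - cb b) (Or.inr (by simp [cb_im]; linarith))
  unfold ph at this
  rw [show x - cb b - I * p + cb b = x - I * p by ring, sub_add_cancel] at this
  rw [this]
  congr 1
  have e : 2 * π * p * (x - cb b) = 2 * π * p * x - I * π * p ^ 2 - π * I := by
    unfold cb
    rcases hp with rfl | rfl
    · field_simp; ring
    · push_cast; field_simp; ring
  rw [e, Complex.exp_sub _ (π * I), Complex.exp_pi_mul_I]; ring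

def Pq (b : ℝ) (f : ℂ → ℂ) (η : ℝ) (x : ℂ) : ℂ := Fz b f η x / f x

lemma Pq_shift (h : QD b f) {p : ℝ} (hp : p = b ∨ p = b⁻¹) {η : ℝ} (hη : -qm b < η) (hη0 : η < 0) {x : ℂ}
    (hx1 : -((b + b⁻¹) / 2) < x.im - p) (hx2 : x.im < (b + b⁻¹) / 2) :
    Pq b f η (x - I * p) = Pq b f η x := by
  obtain ⟨hp0, hpm⟩ := h.p'_bd hp
  have n1 : f (x - I * p) ≠ 0 := h.f_ne (by simp; rw [abs_lt]; constructor <;> linarith)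
  unfold Pq
  rw [h.Fz_shift hp hη hη0 hx1 hx2]
  rw [h.f_shift hp hx2] at n1 ⊢
  rw [mul_div_mul_left _ _ (left_ne_zero_of_mul n1)]

lemma irr_lin (h : QD b f) {m n : ℤ} (hm : m ≠ 0) : (m : ℝ) * b ≠ n * b⁻¹ := by
  intro hh
  have hb := h.hb
  have e : (m : ℝ) * b ^ 2 = n := by
    calc (m : ℝ) * b ^ 2 = (m * b) * b := by ring
      _ = n * b⁻¹ * b := by rw [hh]
      _ = n := by field_simp
  have h2 : Irrational ((m : ℝ) * b ^ 2) := by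
    exact_mod_cast h.hirr.intCast_mul hm
  rw [e] at h2
  exact h2 ⟨n, by simp⟩

lemma Pq_chain (h : QD b f) {η : ℝ} (hη : -qm b < η) (hη0 : η < 0) : ∀ N m n : ℕ, m + n = N →
    |(m : ℝ) * b - n * b⁻¹| < (b + b⁻¹) / 2 →
    Pq b f η (I * (((m : ℝ) * b - n * b⁻¹ : ℝ) : ℂ)) = Pq b f η 0 := by
  have hb := h.hb
  have hb1 := inv_pos.mpr hb
  intro N
  induction N with
  | zero =>
    intro m n hmn _
    have h1 : m = 0 := by omega
    have h2 : n = 0 := by omega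
    subst h1 h2
    simp
  | succ N ih =>
    intro m n hmn hv
    rw [abs_lt] at hv
    rcases lt_trichotomy ((m : ℝ) * b - n * b⁻¹) ((b - b⁻¹) / 2) with hlt | heq | hgt
    · -- decrease n
      rcases n with _ | n
      · exfalso
        have : 1 ≤ m := by omega
        have : (1 : ℝ) ≤ m := by exact_mod_cast this
        have : b ≤ m * b := le_mul_of_one_le_left hb.le this
        simp at hlt
        linarith
      · have := ih m n (by omega) (by
          push_cast at hv hlt
          rw [abs_lt]; constructor <;> linarith)
        rw [← this]
        push_cast at hv hlt
        have hs := h.Pq_shift (p := b⁻¹) (Or.inr rfl) hη hη0 (x := I * (((m : ℝ) * b - n * b⁻¹ : ℝ) : ℂ))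
          (by rw [Complex.I_mul_im, Complex.ofReal_re]; linarith)
          (by rw [Complex.I_mul_im, Complex.ofReal_re]; linarith)
        rw [← hs]
        congr 1
        push_cast; ring
    · exfalso
      refine h.irr_lin (m := 2 * m - 1) (n := 2 * n - 1) (by omega) ?_
      push_cast
      linarith
    · rcases m with _ | m
      · exfalso
        have : 1 ≤ n := by omega
        have : (1 : ℝ) ≤ n := by exact_mod_cast this
        have : b⁻¹ ≤ n * b⁻¹ := le_mul_of_one_le_left hb1.le this
        simp at hgt
        linarith
      · have := ih m n (by omega) (by
          push_cast at hv hgt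
          rw [abs_lt]; constructor <;> linarith)
        rw [← this]
        push_cast at hv hgt
        have hs := h.Pq_shift (p := b) (Or.inl rfl) hη hη0 (x := I * ((((m + 1 : ℕ) : ℝ) * b - n * b⁻¹ : ℝ) : ℂ))
          (by rw [Complex.I_mul_im, Complex.ofReal_re]; push_cast; linarith)
          (by rw [Complex.I_mul_im, Complex.ofReal_re]; push_cast; linarith)
        rw [← hs]
        congr 1
        push_cast; ring

lemma small_vals (h : QD b f) {ε : ℝ} (hε : 0 < ε) : ∃ m n : ℕ,
    (m : ℝ) * b - n * b⁻¹ ≠ 0 ∧ |(m : ℝ) * b - n * b⁻¹| < ε := by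
  have hb := h.hb
  have hb1 := inv_pos.mpr hb
  obtain ⟨N, hN⟩ := exists_nat_gt (1 / (b * ε))
  obtain ⟨j, k, hk0, hk, hjk⟩ := Real.exists_int_int_abs_mul_sub_le (b ^ 2) (n := N + 1) (by omega)
  have hk1 : (0 : ℝ) < k := by exact_mod_cast hk0
  have hN0 : (0 : ℝ) ≤ N := by positivity
  have hlt1 : 1 / (((N + 1 : ℕ) : ℝ) + 1) < 1 := by
    rw [div_lt_one (by positivity)]; push_cast; linarith
  have hj : 0 ≤ j := by
    by_contra hneg
    have : j ≤ -1 := by omega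
    have : (j : ℝ) ≤ -1 := by exact_mod_cast this
    have h1 : 0 < (k : ℝ) * b ^ 2 := by positivity
    have := (abs_le.mp hjk).2
    linarith
  lift j to ℕ using hj
  lift k to ℕ using hk0.le
  refine ⟨k, j, ?_, ?_⟩
  · intro h0
    exact h.irr_lin (m := k) (n := j) hk0.ne' (by push_cast; linarith)
  · have e : (k : ℝ) * b - j * b⁻¹ = ((k : ℝ) * b ^ 2 - j) * b⁻¹ := by field_simp
    rw [e, abs_mul, abs_of_pos hb1]
    push_cast at hjk
    have hlt : 1 / ((N : ℝ) + 1 + 1) < b * ε := by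
      rw [div_lt_comm₀ (by positivity) (by positivity)]
      linarith
    calc _ ≤ 1 / ((N : ℝ) + 1 + 1) * b⁻¹ := by gcongr
      _ < b * ε * b⁻¹ := by gcongr
      _ = ε := by field_simp

lemma Fz_eq_const (h : QD b f) {η : ℝ} (hη : -qm b < η) (hη0 : η < 0) :
    ∃ C : ℂ, ∀ x : ℂ, |x.im| < (b + b⁻¹) / 2 → Fz b f η x = C * f x := by
  have hQ := h.Qpos
  refine ⟨Pq b f η 0, ?_⟩
  set S : Set ℂ := {x : ℂ | |x.im| < (b + b⁻¹) / 2} with hS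
  have hSo : IsOpen S := isOpen_lt (by fun_prop) continuous_const
  have hSc : IsPreconnected S := by
    have : S = {x : ℂ | -((b + b⁻¹) / 2) < x.im} ∩ {x : ℂ | x.im < (b + b⁻¹) / 2} := by
      ext x; simp [hS, abs_lt]
    rw [this]
    exact ((convex_halfSpace_im_gt _).inter (convex_halfSpace_im_lt _)).isPreconnected
  have hPa : AnalyticOnNhd ℂ (Pq b f η) S := by
    apply DifferentiableOn.analyticOnNhd _ hSo
    intro x hx
    exact ((h.Fz_diff hη hη0 hx).div (h.anAt (Or.inr ((le_abs_self _).trans_lt hx))).differentiableAt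
      (h.f_ne hx)).differentiableWithinAt
  have h0S : (0 : ℂ) ∈ S := by simp [hS]; positivity
  have hfr : ∃ᶠ z in 𝓝[≠] (0 : ℂ), Pq b f η z = (fun _ => Pq b f η 0) z := by
    rw [(nhdsWithin_hasBasis Metric.nhds_basis_ball _).frequently_iff]
    intro ε hε
    obtain ⟨m, n, hne, hlt⟩ := h.small_vals (lt_min hε (half_pos hQ))
    refine ⟨I * (((m : ℝ) * b - n * b⁻¹ : ℝ) : ℂ), ⟨?_, ?_⟩, ?_⟩
    · rw [Metric.mem_ball, dist_zero_right, norm_mul, Complex.norm_I, one_mul, Complex.norm_real, Real.norm_eq_abs]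
      exact hlt.trans_le (min_le_left _ _)
    · exact mul_ne_zero Complex.I_ne_zero (by exact_mod_cast hne)
    · exact h.Pq_chain hη hη0 _ m n rfl (hlt.trans_le (min_le_right _ _))
  have := hPa.eqOn_of_preconnected_of_frequently_eq analyticOnNhd_const hSc h0S hfr
  intro x hx
  have hx' := this hx
  have hx2 : Fz b f η x / f x = Pq b f η 0 := hx'
  rwa [div_eq_iff (h.f_ne hx)] at hx2
end QD

lemma norm_gauss (u : ℂ) : ‖Complex.exp (-(I * π * u ^ 2))‖ = Real.exp (2 * π * (u.re * u.im)) := by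
  rw [Complex.norm_exp]; congr 1
  have : -(I * π * u ^ 2) = ((π : ℝ) : ℂ) * (-(I * u ^ 2)) := by ring
  rw [this, Complex.re_ofReal_mul]
  simp [sq]; ring

lemma Zint_tendsto {l : Filter ℝ} [l.IsCountablyGenerated] {ψ : ℝ → ℂ → ℂ} {M η₁ η₂ : ℝ} (h1 : 0 < η₁)
    (h2 : η₂ < 0)
    (hev : ∀ᶠ X in l, ∀ u : ℂ, (u.re ≤ 0 ∧ η₂ ≤ u.im ∧ u.im ≤ η₁) ∨ u.im = η₂ →
      ContinuousAt (ψ X) u ∧ ‖ψ X u‖ ≤ M)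
    (hlim : ∀ u : ℂ, η₂ ≤ u.im → u.im ≤ η₁ → Tendsto (fun X => ψ X u) l (𝓝 1)) :
    Tendsto (fun X => Zint (fun u => Complex.exp (-(I * π * u ^ 2)) * ψ X u) 0 η₁ η₂) l
      (𝓝 (Zint (fun u => Complex.exp (-(I * π * u ^ 2))) 0 η₁ η₂)) := by
  have hlim' : ∀ u : ℂ, η₂ ≤ u.im → u.im ≤ η₁ →
      Tendsto (fun X => Complex.exp (-(I * π * u ^ 2)) * ψ X u) l (𝓝 (Complex.exp (-(I * π * u ^ 2)))) := by
    intro u hu1 hu2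
    have := (hlim u hu1 hu2).const_mul (Complex.exp (-(I * π * u ^ 2)))
    rwa [mul_one] at this
  unfold Zint
  refine Tendsto.add (Tendsto.add ?_ ?_) ?_
  · unfold LI
    refine tendsto_integral_filter_of_dominated_convergence (fun t => M * Real.exp (2 * π * η₁ * t)) ?_ ?_
      ((integrableOn_exp_mul_Iic (by positivity) 0).const_mul M) ?_
    · filter_upwards [hev] with X hX
      refine ContinuousOn.aestronglyMeasurable (fun t ht => (contAt_line
        (k := fun u => Complex.exp (-(I * π * u ^ 2)) * ψ X u) ?_).continuousWithinAt) measurableSet_Iic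
      have ht' : t ≤ 0 := ht
      exact ContinuousAt.mul (by fun_prop) (hX _ (Or.inl ⟨by rw [line_re]; exact ht', by rw [line_im]; linarith,
        by rw [line_im]⟩)).1
    · filter_upwards [hev] with X hX
      refine (ae_restrict_mem measurableSet_Iic).mono fun t ht => ?_
      have ht' : t ≤ 0 := ht
      have := (hX ((t : ℂ) + (η₁ : ℂ) * I) (Or.inl ⟨by rw [line_re]; exact ht', by rw [line_im]; linarith,
        by rw [line_im]⟩)).2
      rw [norm_mul, norm_gauss, line_re, line_im, mul_comm]
      rw [show 2 * π * (t * η₁) = 2 * π * η₁ * t by ring]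
      gcongr
    · exact Eventually.of_forall fun t => hlim' _ (by rw [line_im]; linarith) (by rw [line_im])
  · unfold VI
    refine Tendsto.const_mul I ?_
    refine intervalIntegral.tendsto_integral_filter_of_dominated_convergence (fun _ => M) ?_ ?_
      intervalIntegrable_const ?_
    · filter_upwards [hev] with X hX
      refine ContinuousOn.aestronglyMeasurable (fun s hs => (contAt_vert
        (k := fun u => Complex.exp (-(I * π * u ^ 2)) * ψ X u) ?_).continuousWithinAt) measurableSet_uIoc
      rw [Set.uIoc_of_ge (by linarith)] at hs
      exact ContinuousAt.mul (by fun_prop) (hX _ (Or.inl ⟨by rw [line_re], by rw [line_im]; exact hs.1.le,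
        by rw [line_im]; exact hs.2⟩)).1
    · filter_upwards [hev] with X hX
      refine Eventually.of_forall fun s hs => ?_
      rw [Set.uIoc_of_ge (by linarith)] at hs
      have := (hX (((0 : ℝ) : ℂ) + (s : ℂ) * I) (Or.inl ⟨by rw [line_re], by rw [line_im]; exact hs.1.le,
        by rw [line_im]; exact hs.2⟩)).2
      rw [norm_mul, norm_gauss, line_re, zero_mul, mul_zero, Real.exp_zero, one_mul]
      exact this
    · refine Eventually.of_forall fun s hs => ?_
      rw [Set.uIoc_of_ge (by linarith)] at hs
      exact hlim' _ (by rw [line_im]; exact hs.1.le) (by rw [line_im]; exact hs.2)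
  · unfold RI
    have hi : IntegrableOn (fun t : ℝ => M * Real.exp (-(2 * π * (-η₂)) * t)) (Set.Ioi 0) :=
      (exp_neg_integrableOn_Ioi 0 (b := 2 * π * (-η₂)) (by
        have := Real.pi_pos
        have : 0 < -η₂ := by linarith
        positivity)).const_mul M
    refine tendsto_integral_filter_of_dominated_convergence (fun t => M * Real.exp (-(2 * π * (-η₂)) * t)) ?_ ?_
      hi ?_
    · filter_upwards [hev] with X hX
      refine ContinuousOn.aestronglyMeasurable (fun t ht => (contAt_line
        (k := fun u => Complex.exp (-(I * π * u ^ 2)) * ψ X u) ?_).continuousWithinAt) measurableSet_Ioi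
      exact ContinuousAt.mul (by fun_prop) (hX _ (Or.inr (by rw [line_im]))).1
    · filter_upwards [hev] with X hX
      refine Eventually.of_forall fun t => ?_
      have := (hX ((t : ℂ) + (η₂ : ℂ) * I) (Or.inr (by rw [line_im]))).2
      rw [norm_mul, norm_gauss, line_re, line_im, mul_comm]
      rw [show 2 * π * (t * η₂) = -(2 * π * (-η₂)) * t by ring]
      gcongr
    · exact Eventually.of_forall fun t => hlim' _ (by rw [line_im]) (by rw [line_im]; linarith)

lemma norm_gauss_eps (e : ℝ) (u : ℂ) : ‖Complex.exp (-(e * u ^ 2))‖ = Real.exp (-e * (u.re ^ 2 - u.im ^ 2)) := by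
  rw [Complex.norm_exp]; congr 1
  have : -((e : ℂ) * u ^ 2) = ((-e : ℝ) : ℂ) * (u ^ 2) := by push_cast; ring
  rw [this, Complex.re_ofReal_mul]
  simp [sq]

lemma gauss_eps {η₁ η₂ e : ℝ} (h1 : 0 < η₁) (h2 : η₂ < 0) (he : 0 < e) :
    Zint (fun u => Complex.exp (-(I * π * u ^ 2)) * Complex.exp (-(e * u ^ 2))) 0 η₁ η₂ =
      ((π : ℂ) / (I * π + e)) ^ (1 / 2 : ℂ) := by
  set k : ℂ → ℂ := fun u => Complex.exp (-(I * π * u ^ 2)) * Complex.exp (-(e * u ^ 2)) with hk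
  have kd : Differentiable ℂ k := by rw [hk]; fun_prop
  have kn : ∀ u, ‖k u‖ = Real.exp (2 * π * (u.re * u.im) + -e * (u.re ^ 2 - u.im ^ 2)) := by
    intro u; rw [hk]; simp only; rw [norm_mul, norm_gauss, norm_gauss_eps, ← Real.exp_add]
  have hL : LDec k 0 η₁ 0 := by
    refine ⟨Real.exp (e * (η₁ ^ 2 + 1 / 4)), e, he, fun y hy hi => ?_⟩
    rw [Set.uIcc_of_ge h1.le] at hi
    rw [kn, ← Real.exp_add, Real.exp_le_exp]
    have g1 : y.re * y.im ≤ 0 := mul_nonpos_of_nonpos_of_nonneg hy hi.1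
    have g2 : y.im ^ 2 ≤ η₁ ^ 2 := pow_le_pow_left₀ hi.1 hi.2 2
    have g3 : -e * (y.re ^ 2 - y.im ^ 2) ≤ e * (η₁ ^ 2 + 1 / 4 + y.re) := by
      nlinarith [mul_nonneg he.le (sq_nonneg (y.re + 1 / 2)), mul_le_mul_of_nonneg_left g2 he.le]
    nlinarith [mul_nonneg Real.pi_pos.le (neg_nonneg.mpr g1)]
  have hR : RDec k 0 η₂ 0 := by
    refine ⟨Real.exp (e * (η₂ ^ 2 + 1 / 4)), e, he, fun y hy hi => ?_⟩
    rw [Set.uIcc_of_le h2.le] at hi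
    rw [kn, ← Real.exp_add, Real.exp_le_exp]
    have g1 : y.re * y.im ≤ 0 := mul_nonpos_of_nonneg_of_nonpos hy hi.2
    have g2 : y.im ^ 2 ≤ η₂ ^ 2 := by nlinarith [hi.1, hi.2]
    have g3 : -e * (y.re ^ 2 - y.im ^ 2) ≤ e * (η₂ ^ 2 + 1 / 4 - y.re) := by
      nlinarith [mul_nonneg he.le (sq_nonneg (y.re - 1 / 2)), mul_le_mul_of_nonneg_left g2 he.le]
    nlinarith [mul_nonneg Real.pi_pos.le (neg_nonneg.mpr g1)]
  rw [Zint_heights (fun s => kd.continuous.continuousAt) hL (fun y _ _ => kd y) hR (fun y _ _ => kd y)]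
  have i1 := hL.integrableOn (fun y _ _ => kd y) (s := 0) Set.right_mem_uIcc
  have i2 := hR.integrableOn (fun y _ _ => kd y) (s := 0) Set.right_mem_uIcc
  unfold Zint LI VI RI
  rw [intervalIntegral.integral_same, mul_zero, add_zero, intervalIntegral.integral_Iic_add_Ioi i1 i2,
    ← integral_gaussian_complex (b := I * π + e) (by simpa using he)]
  congr 1
  funext t
  rw [hk]
  simp only
  rw [← Complex.exp_add]
  congr 1
  push_cast; ring

lemma gauss_Z {η₁ η₂ : ℝ} (h1 : 0 < η₁) (h2 : η₂ < 0) :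
    Zint (fun u => Complex.exp (-(I * π * u ^ 2))) 0 η₁ η₂ = Complex.exp (-(π * I / 4)) := by
  have t1 := Zint_tendsto (l := 𝓝[>] 0) (ψ := fun e u => Complex.exp (-(e * u ^ 2)))
    (M := Real.exp (η₁ ^ 2 + η₂ ^ 2)) h1 h2 ?_ ?_
  · have t2 : Tendsto (fun e : ℝ => ((π : ℂ) / (I * π + e)) ^ (1 / 2 : ℂ)) (𝓝[>] 0)
        (𝓝 (((π : ℂ) / (I * π + (0 : ℝ))) ^ (1 / 2 : ℂ))) := by
      have hpi : (π : ℂ) ≠ 0 := by exact_mod_cast Real.pi_ne_zero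
      have hne : I * π + ((0 : ℝ) : ℂ) ≠ 0 := by
        simp [Complex.I_ne_zero, hpi]
      apply Tendsto.mono_left _ nhdsWithin_le_nhds
      have hsl : (π : ℂ) / (I * π + ((0 : ℝ) : ℂ)) ∈ Complex.slitPlane := by
        have : (π : ℂ) / (I * π + ((0 : ℝ) : ℂ)) = -I := by
          simp only [Complex.ofReal_zero, add_zero]
          field_simp
          simp
        rw [this]; simp [Complex.mem_slitPlane_iff]
      have hc : ContinuousAt (fun e : ℝ => (π : ℂ) / (I * π + (e : ℂ))) 0 :=
        ContinuousAt.div (by fun_prop) (by fun_prop) hne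
      exact (hc.cpow (continuousAt_const (y := (1 / 2 : ℂ))) hsl).tendsto
    have t3 := tendsto_nhds_unique t1 (t2.congr' (by
      filter_upwards [self_mem_nhdsWithin] with e he
      exact (gauss_eps h1 h2 he).symm))
    rw [t3]
    have hpi : (π : ℂ) ≠ 0 := by exact_mod_cast Real.pi_ne_zero
    have : (π : ℂ) / (I * π + ((0 : ℝ) : ℂ)) = -I := by
      simp only [Complex.ofReal_zero, add_zero]
      field_simp
      simp
    rw [this, Complex.cpow_def_of_ne_zero (by simp), Complex.log_neg_I]
    congr 1; ring
  · filter_upwards [Ioo_mem_nhdsGT (zero_lt_one)] with e he u hu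
    refine ⟨by fun_prop, ?_⟩
    rw [norm_gauss_eps, Real.exp_le_exp]
    have g : u.im ^ 2 ≤ η₁ ^ 2 + η₂ ^ 2 := by
      rcases hu with ⟨_, g1, g2⟩ | g
      · rcases le_total 0 u.im with g3 | g3 <;> nlinarith
      · rw [g]; nlinarith
    have : e * u.im ^ 2 ≤ 1 * u.im ^ 2 := mul_le_mul_of_nonneg_right he.2.le (sq_nonneg _)
    nlinarith [mul_nonneg he.1.le (sq_nonneg u.re)]
  · intro u _ _
    have hc : Continuous fun e : ℝ => Complex.exp (-((e : ℂ) * u ^ 2)) := by fun_prop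
    have := hc.tendsto 0
    simp only [Complex.ofReal_zero, zero_mul, neg_zero, Complex.exp_zero] at this
    exact this.mono_left nhdsWithin_le_nhds

lemma Zint_real_translate (k : ℂ → ℂ) (X η₁ η₂ : ℝ) :
    Zint k (-X) η₁ η₂ = Zint (fun u => k (u - X)) 0 η₁ η₂ := by
  have e : ∀ t s : ℝ, (t : ℂ) + (s : ℂ) * I - X = ((t - X : ℝ) : ℂ) + (s : ℂ) * I := by
    intro t s; push_cast; ring
  unfold Zint LI VI RI
  simp only [e]
  have mp := measurePreserving_sub_right (volume : Measure ℝ) X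
  have em : MeasurableEmbedding (fun t : ℝ => t - X) := (MeasurableEquiv.subRight X).measurableEmbedding
  have h1 := mp.setIntegral_preimage_emb em (fun t : ℝ => k ((t : ℂ) + (η₁ : ℂ) * I)) (Set.Iic (-X))
  have h2 := mp.setIntegral_preimage_emb em (fun t : ℝ => k ((t : ℂ) + (η₂ : ℂ) * I)) (Set.Ioi (-X))
  have p1 : (fun t : ℝ => t - X) ⁻¹' (Set.Iic (-X)) = Set.Iic 0 := by
    ext t; simp
  have p2 : (fun t : ℝ => t - X) ⁻¹' (Set.Ioi (-X)) = Set.Ioi 0 := by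
    ext t; simp
  rw [p1] at h1
  rw [p2] at h2
  rw [h1, h2, zero_sub]

namespace QD
variable {b : ℝ} {f : ℂ → ℂ}

lemma Fz_real (h : QD b f) {η : ℝ} (hη : -qm b < η) (hη0 : η < 0) {X : ℝ} (hX : 1 ≤ X) :
    Fz b f η X = Complex.exp (π * I * X ^ 2) *
      Zint (fun u => Complex.exp (-(I * π * u ^ 2)) * ph b f (u - X)) 0 ((b + b⁻¹) / 2) η := by
  have hQ := h.Qpos
  have hp := h.ppos
  have hpq := pm_add_qm b
  have hh := h.halfQ_lt_p
  unfold Fz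
  rw [Zint_corner (c := -1) (c' := -X) (by linarith)
    (h.kx_int_left (by norm_num) (by linarith) hh (by simp; linarith [hQ]))
    (h.kx_int_right (-X) (by linarith) hη0 (by simp; linarith [hQ]))
    (h.kx_LDiff _ (by norm_num) _ _), Zint_real_translate]
  have e : (fun u : ℂ => kx b f X (u - X)) = fun u => Complex.exp (π * I * X ^ 2) *
      (Complex.exp (-(I * π * u ^ 2)) * ph b f (u - X)) := by
    funext u
    unfold kx
    rw [← mul_assoc, ← Complex.exp_add]
    congr 2
    ring
  rw [e]
  unfold Zint LI VI RI
  simp only [intervalIntegral.integral_const_mul, integral_const_mul]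
  ring

lemma Z_lim (h : QD b f) {η : ℝ} (hη : -qm b < η) (hη0 : η < 0) :
    Tendsto (fun X : ℝ => Zint (fun u => Complex.exp (-(I * π * u ^ 2)) * ph b f (u - X)) 0 ((b + b⁻¹) / 2) η)
      atTop (𝓝 (Complex.exp (-(π * I / 4)))) := by
  have hQ := h.Qpos
  have hp := h.ppos
  have hq := h.qpos
  have hpq := pm_add_qm b
  have hh := h.halfQ_lt_p
  have hlt := h.q_lt_p
  rw [← gauss_Z (η₁ := (b + b⁻¹) / 2) (η₂ := η) (by linarith) hη0]
  set κ := min (min (pm b - (b + b⁻¹) / 2) (η + (b + b⁻¹))) (min (-η) 1)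
  have k1 : κ ≤ pm b - (b + b⁻¹) / 2 := (min_le_left _ _).trans (min_le_left _ _)
  have k2 : κ ≤ η + (b + b⁻¹) := (min_le_left _ _).trans (min_le_right _ _)
  have k3 : κ ≤ -η := (min_le_right _ _).trans (min_le_left _ _)
  have k0 : 0 < κ := lt_min (lt_min (by linarith) (by linarith)) (lt_min (by linarith) one_pos)
  obtain ⟨M1, hM1, b1⟩ := h.left_bd (a := 1) one_pos k0
  obtain ⟨M2, hM2, b2⟩ := h.strip_left k0 0
  obtain ⟨M3, hM3, b3⟩ := h.strip_right k0 0
  refine Zint_tendsto (M := M1 + M2 + M3) (ψ := fun X u => ph b f (u - X)) (by linarith) hη0 ?_ ?_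
  · filter_upwards [eventually_ge_atTop 1] with X hX u hu
    constructor
    · have hd : DifferentiableAt ℂ (ph b f) (u - X) := by
        apply h.ph_diff
        rcases hu with hu | hu
        · left; simp; linarith [hu.1]
        · right; simp; linarith
      exact ContinuousAt.comp (f := fun u : ℂ => u - X) hd.continuousAt (by fun_prop)
    · rcases hu with hu | hu
      · have := b1 (u - X) (by simp; linarith [hu.2.1]) (by simp; linarith [hu.2.2]) (by simp; linarith [hu.1])
        linarith
      · rcases le_total (u - X).re 0 with hr | hr
        · have := b2 (u - X) (by simp; linarith) (by simp; linarith) hr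
          linarith
        · have := b3 (u - X) (by simp; linarith) (by simp; linarith) (by simpa using hr)
          have e1 : Real.exp (-2 * π * ((u - X).re * ((u - X).im + (b + b⁻¹) / 2))) ≤ 1 := by
            rw [Real.exp_le_one_iff]
            have : 0 ≤ (u - X).re * ((u - X).im + (b + b⁻¹) / 2) :=
              mul_nonneg hr (by simp; linarith)
            have := mul_nonneg Real.pi_pos.le this
            linarith
          have := mul_le_mul_of_nonneg_left e1 hM3.le
          linarith
  · intro u h1 h2
    exact h.left_tendsto (by linarith) (by linarith)

lemma Fz_eq (h : QD b f) {η : ℝ} (hη : -qm b < η) (hη0 : η < 0) {x : ℂ} (hx : |x.im| < (b + b⁻¹) / 2) :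
    Fz b f η x = Complex.exp (-(π * I / 4)) / Kc b * f x := by
  have hQ := h.Qpos
  obtain ⟨C, hC⟩ := h.Fz_eq_const hη hη0
  rw [hC x hx]
  congr 1
  have l1 := h.Z_lim hη hη0
  have l2 := h.left_tendsto (u := -cb b) (by simp only [neg_im, cb_im]; linarith)
    (by simp only [neg_im, cb_im]; linarith [h.ppos])
  have l3 := l1.mul l2
  rw [mul_one] at l3
  have l4 : Tendsto (fun _ : ℝ => C * Kc b) atTop (𝓝 (Complex.exp (-(π * I / 4)))) := by
    refine l3.congr' ?_
    filter_upwards [eventually_ge_atTop 1] with X hX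
    have e1 := h.Fz_real hη hη0 hX
    rw [hC X (by simp; linarith)] at e1
    have e2 := h.inv (z := X) (Or.inl (by simp; linarith))
    have e3 : ph b f (-cb b - X) = f (-X) := by unfold ph; congr 1; ring
    have ne := Complex.exp_ne_zero (π * I * X ^ 2)
    rw [e3]
    apply mul_left_cancel₀ ne
    rw [← mul_assoc, ← e1]
    linear_combination C * e2
  rw [eq_div_iff (Kc_ne b)]
  exact (tendsto_nhds_unique l4 tendsto_const_nhds).symm

end QD

lemma const_eq (b : ℝ) (hb : 0 < b) : c0 b * (Complex.exp (-(π * I / 4)) / Kc b) = zeta0 b := by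
  unfold c0 zeta0 Kc
  rw [div_mul_div_comm, ← Complex.exp_add, ← Complex.exp_add, ← Complex.exp_sub]
  congr 1
  have : (b : ℂ) ≠ 0 := by exact_mod_cast hb.ne'
  have hc : (cb b) ^ 2 = -((b : ℂ) + (b : ℂ)⁻¹) ^ 2 / 4 := by
    unfold cb
    rw [div_pow, mul_pow, I_sq]; ring
  rw [hc]
  field_simp
  ring

lemma path_ftc {k G : ℂ → ℂ} {S : Set ℂ} (hG : ∀ y ∈ S, HasDerivAt G (k y) y) (hk : ∀ y ∈ S, ContinuousAt k y)
    {γ γ' : ℝ → ℂ} (hγ : ∀ s, HasDerivAt γ (γ' s) s) (hγ' : Continuous γ') {a d : ℝ}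
    (hS : ∀ s ∈ Set.uIcc a d, γ s ∈ S) :
    ∫ s in a..d, γ' s * k (γ s) = G (γ d) - G (γ a) := by
  have hint : IntervalIntegrable (fun s => γ' s * k (γ s)) volume a d := by
    apply ContinuousOn.intervalIntegrable
    intro s hs
    apply ContinuousAt.continuousWithinAt
    exact (hγ'.continuousAt).mul ((hk _ (hS s hs)).comp (hγ s).continuousAt)
  refine intervalIntegral.integral_eq_sub_of_hasDerivAt (f := fun s => G (γ s)) (fun s hs => ?_) hint
  have := (hG _ (hS s hs)).scomp s (hγ s)
  rw [smul_eq_mul] at this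
  exact this

lemma semi {k U : ℂ → ℂ} {r δ η : ℝ} (hU : DifferentiableOn ℂ U (Metric.ball 0 r)) (hδ : 0 < δ) (hη : η < 0)
    (hr : 0 < r) (hdr : δ ^ 2 + η ^ 2 < r ^ 2)
    (hk : ∀ y ∈ Metric.ball (0 : ℂ) r, y.re ≠ 0 ∨ y.im < 0 → k y = U y / y)
    (hc : ∀ y : ℂ, y.re ≠ 0 ∨ y.im < 0 → ContinuousAt k y) :
    ∫ θ in (π : ℝ)..(2 * π), (I * (δ : ℂ) * Complex.exp (I * (θ : ℂ))) * k ((δ : ℂ) * Complex.exp (I * (θ : ℂ))) =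
      VI k (-δ) 0 η + (∫ t in (-δ)..δ, k ((t : ℂ) + (η : ℂ) * I)) - VI k δ 0 η := by
  have hbn : Metric.ball (0 : ℂ) r ∈ 𝓝 (0 : ℂ) := Metric.ball_mem_nhds _ hr
  obtain ⟨P, hP⟩ := ((Complex.differentiableOn_dslope hbn).mpr hU).isExactOn_ball
  set S : Set ℂ := {y | y ∈ Metric.ball (0 : ℂ) r ∧ (y.re ≠ 0 ∨ y.im < 0)} with hS
  set G : ℂ → ℂ := fun y => P y + U 0 * Complex.log (I * y) with hGdef
  have memS : ∀ y : ℂ, |y.re| ≤ δ → |y.im| ≤ |η| → (y.re ≠ 0 ∨ y.im < 0) → y ∈ S := by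
    intro y h1 h2 h3
    refine ⟨?_, h3⟩
    rw [mem_ball_zero_iff]
    apply lt_of_pow_lt_pow_left₀ 2 hr.le
    rw [Complex.sq_norm, Complex.normSq_apply]
    have a1 : y.re ^ 2 ≤ δ ^ 2 := sq_le_sq' (by linarith [abs_le.mp h1]) (abs_le.mp h1).2
    have a2 : y.im ^ 2 ≤ η ^ 2 := sq_le_sq.mpr h2
    nlinarith
  have hG : ∀ y ∈ S, HasDerivAt G (k y) y := by
    rintro y ⟨hy, hy2⟩
    have hy0 : y ≠ 0 := by rintro rfl; simp at hy2
    have hsl : I * y ∈ Complex.slitPlane := by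
      rw [Complex.mem_slitPlane_iff]
      rcases hy2 with h | h
      · right; simpa using h
      · left; simpa using h
    have d1 := hP y hy
    have d2 : HasDerivAt (fun y : ℂ => Complex.log (I * y)) (I / (I * y)) y := by
      have : HasDerivAt (fun y : ℂ => I * y) I y := by simpa using (hasDerivAt_id y).const_mul I
      exact this.clog hsl
    have d3 := d1.add (d2.const_mul (U 0))
    refine HasDerivAt.congr_deriv d3 ?_
    rw [hk y hy hy2, dslope_of_ne _ hy0, slope_def_field, sub_zero]
    field_simp [I_ne_zero]
    ring
  have hkS : ∀ y ∈ S, ContinuousAt k y := fun y hy => hc y hy.2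
  -- semicircle
  have A : ∫ θ in (π : ℝ)..(2 * π), (I * (δ : ℂ) * Complex.exp (I * (θ : ℂ))) *
      k ((δ : ℂ) * Complex.exp (I * (θ : ℂ))) = G δ - G (-δ) := by
    have := path_ftc hG hkS (γ := fun θ : ℝ => (δ : ℂ) * Complex.exp (I * (θ : ℂ)))
      (γ' := fun θ : ℝ => (I * (δ : ℂ) * Complex.exp (I * (θ : ℂ)))) (a := π) (d := 2 * π) (fun s => ?_)
      (by fun_prop) ?_
    · rw [this]
      have e1 : (δ : ℂ) * Complex.exp (I * ((2 * π : ℝ) : ℂ)) = δ := by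
        have : Complex.exp (I * ((2 * π : ℝ) : ℂ)) = 1 := by
          rw [← Complex.exp_two_pi_mul_I]; congr 1; push_cast; ring
        rw [this, mul_one]
      have e2 : (δ : ℂ) * Complex.exp (I * (π : ℂ)) = -δ := by
        rw [mul_comm I, Complex.exp_pi_mul_I]; ring
      rw [e1, e2]
    · have h1 : HasDerivAt (fun θ : ℝ => I * (θ : ℂ)) I s := by
        simpa using (Complex.ofRealCLM.hasDerivAt (x := s)).const_mul I
      have h2 := (h1.cexp).const_mul (δ : ℂ)
      exact HasDerivAt.congr_deriv h2 (by ring)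
    · intro s hs
      rw [Set.uIcc_of_le (by linarith [Real.pi_pos])] at hs
      have hre : ((δ : ℂ) * Complex.exp (I * (s : ℂ))).re = δ * Real.cos s := by
        rw [mul_comm I, Complex.re_ofReal_mul, Complex.exp_ofReal_mul_I_re]
      have him : ((δ : ℂ) * Complex.exp (I * (s : ℂ))).im = δ * Real.sin s := by
        rw [mul_comm I, Complex.im_ofReal_mul, Complex.exp_ofReal_mul_I_im]
      refine ⟨?_, ?_⟩
      · rw [mem_ball_zero_iff, norm_mul, mul_comm I, Complex.norm_exp_ofReal_mul_I, mul_one, Complex.norm_real,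
          Real.norm_eq_abs, abs_of_pos hδ]
        apply lt_of_pow_lt_pow_left₀ 2 hr.le
        nlinarith [sq_nonneg η]
      · rw [hre, him]
        have hsin : Real.sin s ≤ 0 := by
          have := Real.sin_nonneg_of_nonneg_of_le_pi (x := s - π) (by linarith [hs.1]) (by linarith [hs.2])
          rw [Real.sin_sub_pi] at this
          linarith
        rcases hsin.lt_or_eq with h | h
        · right; exact mul_neg_of_pos_of_neg hδ h
        · left
          have := Real.sin_sq_add_cos_sq s
          intro h0
          have hc0 : Real.cos s = 0 := by
            rcases mul_eq_zero.mp h0 with h1 | h1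
            · exact absurd h1 hδ.ne'
            · exact h1
          rw [h, hc0] at this
          norm_num at this
  have V : ∀ c : ℝ, |c| ≤ δ → c ≠ 0 → VI k c 0 η = G ((c : ℂ) + (η : ℂ) * I) - G c := by
    intro c hc1 hc0
    have := path_ftc hG hkS (γ := fun s : ℝ => (c : ℂ) + (s : ℂ) * I)
      (γ' := fun _ : ℝ => I) (a := 0) (d := η) (fun s => ?_) (by fun_prop) ?_
    · unfold VI
      rw [← intervalIntegral.integral_const_mul, this]
      simp
    · have h1 := ((Complex.ofRealCLM.hasDerivAt (x := s)).mul_const I).const_add (c : ℂ)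
      simpa using h1
    · intro s hs
      rw [Set.uIcc_of_ge hη.le] at hs
      apply memS
      · simpa using hc1
      · simp only [line_im]
        rw [abs_of_nonpos hs.2, abs_of_neg hη]; linarith [hs.1]
      · left; simpa using hc0
  have H : ∫ t in (-δ)..δ, k ((t : ℂ) + (η : ℂ) * I) = G ((δ : ℂ) + (η : ℂ) * I) - G (((-δ : ℝ) : ℂ) + (η : ℂ) * I) := by
    have := path_ftc hG hkS (γ := fun s : ℝ => (s : ℂ) + (η : ℂ) * I)
      (γ' := fun _ : ℝ => 1) (a := -δ) (d := δ) (fun s => ?_) (by fun_prop) ?_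
    · simpa using this
    · simpa using (Complex.ofRealCLM.hasDerivAt (x := s)).add_const ((η : ℂ) * I)
    · intro s hs
      rw [Set.uIcc_of_le (by linarith)] at hs
      apply memS
      · simp only [line_re]; exact abs_le.mpr hs
      · simp
      · right; simpa using hη
  rw [A, H, V δ (abs_of_pos hδ).le hδ.ne', V (-δ) (by rw [abs_neg, abs_of_pos hδ]) (neg_ne_zero.mpr hδ.ne')]
  push_cast
  ring

namespace QD
variable {b : ℝ} {f : ℂ → ℂ}

lemma exists_U (h : QD b f) (x : ℂ) : ∃ U : ℂ → ℂ, DifferentiableOn ℂ U (Metric.ball 0 (qm b)) ∧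
    ∀ y ∈ Metric.ball (0 : ℂ) (qm b), y.re ≠ 0 ∨ y.im < 0 → kx b f x y = U y / y := by
  have hq := h.qpos
  have hp := h.ppos
  have hpq1 := h.pq_one
  have hpC : (pm b : ℂ) ≠ 0 := by exact_mod_cast hp.ne'
  set p := pm b with hpdef
  set e : ℂ → ℂ := fun y => 1 - Complex.exp (2 * π * p * y) with he
  have e0 : e 0 = 0 := by simp [he]
  have hpi : (π : ℂ) ≠ 0 := by exact_mod_cast Real.pi_ne_zero
  have hed : HasDerivAt e (-(2 * π * p)) 0 := by
    have h1 : HasDerivAt (fun y : ℂ => 2 * π * p * y) (2 * π * p) 0 := by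
      simpa using (hasDerivAt_id (0 : ℂ)).const_mul (2 * π * p : ℂ)
    have h2 := (h1.cexp).const_sub 1
    exact HasDerivAt.congr_deriv h2 (by simp)
  have hne : ∀ y ∈ Metric.ball (0 : ℂ) (qm b), dslope e 0 y ≠ 0 := by
    intro y hy
    by_cases hy0 : y = 0
    · rw [hy0, dslope_same, hed.deriv]
      simp [hpi, hpC]
    · rw [dslope_of_ne _ hy0, slope_def_field, e0, sub_zero, sub_zero]
      refine div_ne_zero ?_ hy0
      intro h0
      have h1 : Complex.exp (2 * π * p * y) = 1 := by
        simp only [he] at h0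
        linear_combination -h0
      rw [Complex.exp_eq_one_iff] at h1
      obtain ⟨n, hn⟩ := h1
      have h2 : (p : ℂ) * y = n * I := by
        have h20 : (2 * π : ℂ) ≠ 0 := by simp [hpi]
        apply mul_left_cancel₀ h20
        linear_combination hn
      have h3 := congrArg norm h2
      rw [norm_mul, norm_mul, Complex.norm_real, Complex.norm_I, mul_one, Real.norm_eq_abs, abs_of_pos hp,
        Complex.norm_intCast] at h3
      rw [mem_ball_zero_iff] at hy
      have h4 : p * ‖y‖ < 1 := by rw [← hpq1]; exact mul_lt_mul_of_pos_left hy hp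
      rw [h3] at h4
      have h5 : n = 0 := by
        rw [← Int.abs_lt_one_iff]
        exact_mod_cast h4
      rw [h5] at h2
      simp at h2
      rcases h2 with h2 | h2
      · exact hpC (by exact_mod_cast h2)
      · exact hy0 h2
  refine ⟨fun y => Complex.exp (-(2 * π * I * x * y) - I * π * y ^ 2) * ph b f (y - I * p) / dslope e 0 y, ?_, ?_⟩
  · have dsl : DifferentiableOn ℂ (dslope e 0) (Metric.ball 0 (qm b)) := by
      refine (Complex.differentiableOn_dslope (Metric.ball_mem_nhds _ hq)).mpr ?_
      apply Differentiable.differentiableOn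
      simp only [he]
      fun_prop
    refine DifferentiableOn.div ?_ dsl hne
    refine DifferentiableOn.mul (Differentiable.differentiableOn (by fun_prop)) ?_
    intro y hy
    apply DifferentiableAt.differentiableWithinAt
    have hd : DifferentiableAt ℂ (ph b f) (y - I * p) := by
      apply h.ph_diff
      right
      rw [mem_ball_zero_iff] at hy
      have := (le_abs_self _).trans (Complex.abs_im_le_norm y)
      have := h.q_lt_p
      simp
      linarith
    exact DifferentiableAt.comp (g := ph b f) (f := fun y : ℂ => y - I * p) y hd (by fun_prop)
  · intro y hy hy2
    have hy0 : y ≠ 0 := by rintro rfl; simp at hy2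
    have hn := hne y hy
    have hs : ph b f (y - I * p) = e y * ph b f y := h.ph_shift (pm_mem b) hy2
    have hds : e y = y * dslope e 0 y := by
      rw [dslope_of_ne _ hy0, slope_def_field, e0, sub_zero, sub_zero]
      field_simp
    simp only [hs]
    rw [hds]
    unfold kx
    field_simp

lemma left_lim (h : QD b f) (x : ℝ) {δ : ℝ} (hδ : 0 < δ) :
    Tendsto (fun T : ℝ => ∫ t in (-T)..(-δ), kx b f x ((t : ℂ) + ((0 : ℝ) : ℂ) * I)) atTop
      (𝓝 (LI (kx b f x) (-δ) ((b + b⁻¹) / 2) - VI (kx b f x) (-δ) 0 ((b + b⁻¹) / 2))) := by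
  have hQ := h.Qpos
  have hh := h.halfQ_lt_p
  apply left_shift_gen (h.kx_LDiff _ (by linarith) _ _)
    (h.kx_int_left (by linarith) (by linarith) hh (by simp; linarith [hQ]))
  obtain ⟨M, hM, hb⟩ := h.kx_left (c := -δ) (κ := pm b - (b + b⁻¹) / 2) (by linarith) (by linarith)
    (norm_nonneg (x : ℂ))
  have bd : ∀ T s : ℝ, δ ≤ T → 0 < s → s ≤ (b + b⁻¹) / 2 →
      ‖kx b f x (((-T : ℝ) : ℂ) + (s : ℂ) * I)‖ ≤ M * Real.exp (2 * π * s * (-T)) := by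
    intro T s hT h1 h2
    have := hb x (((-T : ℝ) : ℂ) + (s : ℂ) * I) s le_rfl (by rw [line_re]; linarith)
      (by rw [line_im]; linarith [h.p_lt_Q]) (by rw [line_im]; linarith) (by rw [line_im]; simp)
    rwa [line_re] at this
  have := intervalIntegral.tendsto_integral_filter_of_dominated_convergence (μ := volume) (a := 0)
    (b := (b + b⁻¹) / 2) (l := atTop)
    (F := fun (T : ℝ) (s : ℝ) => kx b f x (((-T : ℝ) : ℂ) + (s : ℂ) * I)) (f := fun _ => 0) (fun _ => M) ?_ ?_ ?_ ?_
  · simpa using this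
  · filter_upwards [eventually_ge_atTop δ] with T hT
    have : Continuous fun s : ℝ => kx b f x (((-T : ℝ) : ℂ) + (s : ℂ) * I) :=
      continuous_iff_continuousAt.mpr fun s => contAt_vert (h.kx_cont_vert x (by linarith) s)
    exact this.aestronglyMeasurable
  · filter_upwards [eventually_ge_atTop δ] with T hT
    refine Eventually.of_forall fun s hs => ?_
    rw [Set.uIoc_of_le (by linarith)] at hs
    refine (bd T s hT hs.1 hs.2).trans ?_
    have : Real.exp (2 * π * s * (-T)) ≤ 1 := by
      rw [Real.exp_le_one_iff]
      have : 0 ≤ 2 * π * s * T := mul_nonneg (mul_nonneg (by positivity) hs.1.le) (by linarith)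
      linarith
    exact mul_le_of_le_one_right hM.le this
  · exact intervalIntegrable_const
  · refine Eventually.of_forall fun s hs => ?_
    rw [Set.uIoc_of_le (by linarith)] at hs
    rw [tendsto_zero_iff_norm_tendsto_zero]
    have lim : Tendsto (fun T : ℝ => M * Real.exp (2 * π * s * (-T))) atTop (𝓝 (M * 0)) := by
      refine Tendsto.const_mul _ ?_
      exact Real.tendsto_exp_atBot.comp (Tendsto.const_mul_atBot (by have := hs.1; positivity) tendsto_neg_atTop_atBot)
    rw [mul_zero] at lim
    refine squeeze_zero' (Eventually.of_forall fun _ => norm_nonneg _) ?_ lim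
    filter_upwards [eventually_ge_atTop δ] with T hT
    exact bd T s hT hs.1 hs.2

lemma right_lim (h : QD b f) (x : ℝ) {δ η : ℝ} (hδ : 0 < δ) (hη : -qm b < η) (hη0 : η < 0) :
    Tendsto (fun T : ℝ => ∫ t in δ..T, kx b f x ((t : ℂ) + ((0 : ℝ) : ℂ) * I)) atTop
      (𝓝 (RI (kx b f x) δ η + VI (kx b f x) δ 0 η)) := by
  have hQ := h.Qpos
  have hp := h.ppos
  have hpq := pm_add_qm b
  have hd : RDiff (kx b f x) δ 0 η := fun y hy _ => h.kx_diff x (Or.inl (by linarith : 0 < y.re).ne')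
  have hdec : RDec (kx b f x) δ 0 η := by
    obtain ⟨M, hM, hb⟩ := h.right_bd hδ hp
    refine ⟨M * Real.exp (2 * π * (‖(x : ℂ)‖ * (b + b⁻¹) + ((b + b⁻¹) / 2 + ‖(x : ℂ)‖) * 0)),
      2 * π * ((b + b⁻¹) / 2), by positivity, fun y hy hi => ?_⟩
    rw [Set.uIcc_of_ge hη0.le] at hi
    refine h.kx_right_aux (norm_nonneg _) le_rfl (hb y (by linarith [hi.1]) (by linarith [hi.2]) hy) le_rfl
      (by linarith) ?_ (by linarith) (by simp)
    rw [abs_of_nonpos hi.2]; linarith [hi.1]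
  exact right_shift_gen hd (hdec.integrableOn hd Set.right_mem_uIcc) hdec.vert

lemma integrand_kx (h : QD b f) (x : ℝ) {y : ℂ} (hy : y.re ≠ 0 ∨ (y.im < 0 ∧ -(b + b⁻¹) < y.im)) :
    Complex.exp (-2 * (π : ℂ) * Complex.I * (x : ℂ) * y) * Complex.exp (2 * (π : ℂ) * Complex.I * cb b * y) /
      f (-y - cb b) = c0 b * kx b f x y := by
  rw [mul_div_assoc, h.integrand_eq hy]
  unfold kx
  rw [sub_eq_add_neg, Complex.exp_add]
  have : (-2 * (π : ℂ) * Complex.I * (x : ℂ) * y) = -(2 * π * I * x * y) := by ring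
  rw [this]
  ring

lemma sum_eq (h : QD b f) (x : ℝ) {δ η : ℝ} (hδ : 0 < δ) (hη : -qm b < η) (hη0 : η < 0) :
    (LI (kx b f x) (-δ) ((b + b⁻¹) / 2) - VI (kx b f x) (-δ) 0 ((b + b⁻¹) / 2)) +
      (VI (kx b f x) (-δ) 0 η + (∫ t in (-δ)..δ, kx b f x ((t : ℂ) + (η : ℂ) * I)) - VI (kx b f x) δ 0 η) +
      (RI (kx b f x) δ η + VI (kx b f x) δ 0 η) = Fz b f η x := by
  have hQ := h.Qpos
  have hpq := pm_add_qm b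
  have hp := h.ppos
  have hh := h.halfQ_lt_p
  have il : ∀ c : ℝ, c < 0 → IntegrableOn (fun t : ℝ => kx b f x ((t : ℂ) + (((b + b⁻¹) / 2 : ℝ) : ℂ) * I)) (Set.Iic c) :=
    fun c hc => h.kx_int_left hc (by linarith) hh (by simp; linarith [hQ])
  have ir : ∀ c : ℝ, IntegrableOn (fun t : ℝ => kx b f x ((t : ℂ) + (η : ℂ) * I)) (Set.Ioi c) :=
    fun c => h.kx_int_right c (by linarith) hη0 (by simp; linarith [hQ])
  have corner : Fz b f η x = Zint (kx b f x) (-δ) ((b + b⁻¹) / 2) η := by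
    unfold Fz
    rcases le_total (-δ) (-1) with hc | hc
    · exact Zint_corner hc (il _ (by norm_num)) (ir _) (h.kx_LDiff _ (by norm_num) _ _)
    · exact (Zint_corner hc (il _ (by linarith)) (ir _) (h.kx_LDiff _ (by linarith) _ _)).symm
  rw [corner]
  have v := VI_add (k := kx b f x) (c := -δ) (fun s => h.kx_cont_vert x (by linarith) s) ((b + b⁻¹) / 2) 0 η
  have vs := VI_symm (kx b f x) (-δ) ((b + b⁻¹) / 2) 0
  have r : RI (kx b f x) (-δ) η - RI (kx b f x) δ η = ∫ t in (-δ)..δ, kx b f x ((t : ℂ) + (η : ℂ) * I) :=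
    intervalIntegral.integral_Ioi_sub_Ioi (ir _) (by linarith)
  unfold Zint
  linear_combination v - vs - r

end QD

/-- the Fourier-type integral representation
`∫_{γ_δ} e^{−2πixy}·e^{2πic_b y}/e_b(−y−c_b) dy = ζ₀·e_b(x)` where `γ_δ` is the real axis
with the segment `[−δ,δ]` replaced by the semicircle of radius `δ` below the origin,
and `e_b` under the integral denotes the meromorphic continuation `f` of `e_b`
(characterized by the stated hypotheses). The improper integral is a limit over
cutoffs `R, R' → ∞`; since the limit is the same for every admissible `δ`, it is in
particular independent of `δ`. -/
theorem statement8 (b : ℝ) (hb : 0 < b) (hirr : Irrational (b ^ 2))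
    (f : ℂ → ℂ)
    (hf_ext : ∀ z : ℂ, |z.im| < (b + b⁻¹) / 2 → f z = eb b z)
    (hf_an : ∀ z : ℂ, z ∉ ebPoles b → AnalyticAt ℂ f z)
    (hf_shift₁ : ∀ z : ℂ, z - Complex.I * (b : ℂ) / 2 ∉ ebPoles b →
      z + Complex.I * (b : ℂ) / 2 ∉ ebPoles b →
      f (z - Complex.I * (b : ℂ) / 2) =
        (1 + Complex.exp (2 * (π : ℂ) * (b : ℂ) * z)) * f (z + Complex.I * (b : ℂ) / 2))
    (hf_shift₂ : ∀ z : ℂ, z - Complex.I * (b : ℂ)⁻¹ / 2 ∉ ebPoles b →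
      z + Complex.I * (b : ℂ)⁻¹ / 2 ∉ ebPoles b →
      f (z - Complex.I * (b : ℂ)⁻¹ / 2) =
        (1 + Complex.exp (2 * (π : ℂ) * (b : ℂ)⁻¹ * z)) *
          f (z + Complex.I * (b : ℂ)⁻¹ / 2))
    (x δ : ℝ) (hδ₁ : 0 < δ) (hδ₂ : δ < min b b⁻¹) :
    Tendsto
      (fun R : ℝ × ℝ =>
        (∫ t in (-R.1)..(-δ),
          Complex.exp (-2 * (π : ℂ) * Complex.I * (x : ℂ) * (t : ℂ)) *
            Complex.exp (2 * (π : ℂ) * Complex.I * cb b * (t : ℂ)) /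
              f (-(t : ℂ) - cb b)) +
        (∫ θ in (π : ℝ)..(2 * π),
          (Complex.I * (δ : ℂ) * Complex.exp (Complex.I * (θ : ℂ))) *
            (Complex.exp (-2 * (π : ℂ) * Complex.I * (x : ℂ) *
                ((δ : ℂ) * Complex.exp (Complex.I * (θ : ℂ)))) *
              Complex.exp (2 * (π : ℂ) * Complex.I * cb b *
                ((δ : ℂ) * Complex.exp (Complex.I * (θ : ℂ)))) /
              f (-((δ : ℂ) * Complex.exp (Complex.I * (θ : ℂ))) - cb b))) +
        (∫ t in δ..R.2,
          Complex.exp (-2 * (π : ℂ) * Complex.I * (x : ℂ) * (t : ℂ)) *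
            Complex.exp (2 * (π : ℂ) * Complex.I * cb b * (t : ℂ)) /
              f (-(t : ℂ) - cb b)))
      (atTop ×ˢ atTop) (𝓝 (zeta0 b * eb b (x : ℂ))) := by
  have h : QD b f := ⟨hb, hirr, hf_ext, hf_an, hf_shift₁, hf_shift₂⟩
  have hQ := h.Qpos
  have hq := h.qpos
  have hp := h.ppos
  have hpq := pm_add_qm b
  have hδq : δ < qm b := hδ₂
  set η : ℝ := -((qm b - δ) / 2) with hηdef
  have hη : -qm b < η := by rw [hηdef]; linarith
  have hη0 : η < 0 := by rw [hηdef]; linarith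
  have hdr : δ ^ 2 + η ^ 2 < qm b ^ 2 := by rw [hηdef]; nlinarith
  obtain ⟨U, hU, hkU⟩ := h.exists_U x
  have hsemi := semi hU hδ₁ hη0 hq hdr hkU (fun y hy => (h.kx_diff x hy).continuousAt)
  have l1 := (h.left_lim x hδ₁).comp (tendsto_fst (f := atTop) (g := (atTop : Filter ℝ)))
  have l2 := (h.right_lim x hδ₁ hη hη0).comp (tendsto_snd (f := (atTop : Filter ℝ)) (g := atTop))
  have l3 := (((l1.add_const (VI (kx b f x) (-δ) 0 η +
    (∫ t in (-δ)..δ, kx b f x ((t : ℂ) + (η : ℂ) * I)) - VI (kx b f x) δ 0 η)).add l2).const_mul (c0 b))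
  rw [h.sum_eq x hδ₁ hη hη0, h.Fz_eq hη hη0 (by simp; linarith), ← mul_assoc, const_eq b hb,
    hf_ext _ (by simp; linarith), ← hsemi] at l3
  refine l3.congr' ?_
  have ev : ∀ᶠ R : ℝ × ℝ in atTop ×ˢ atTop, δ ≤ R.1 ∧ δ ≤ R.2 :=
    (eventually_ge_atTop δ).prod_mk (eventually_ge_atTop δ)
  filter_upwards [ev] with R hR
  simp only [Function.comp_apply]
  rw [mul_add, mul_add, ← intervalIntegral.integral_const_mul, ← intervalIntegral.integral_const_mul,
    ← intervalIntegral.integral_const_mul]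
  congr 1
  · congr 1
    · refine intervalIntegral.integral_congr fun t ht => ?_
      rw [Set.uIcc_of_le (by linarith [hR.1])] at ht
      have ht2 := ht.2
      simp only [Complex.ofReal_zero, zero_mul, add_zero]
      exact (h.integrand_kx x (y := t) (Or.inl (by simp only [Complex.ofReal_re]; linarith))).symm
    · refine intervalIntegral.integral_congr fun s hs => ?_
      rw [Set.uIcc_of_le (by linarith [Real.pi_pos])] at hs
      have hre : ((δ : ℂ) * Complex.exp (I * (s : ℂ))).re = δ * Real.cos s := by
        rw [mul_comm I, Complex.re_ofReal_mul, Complex.exp_ofReal_mul_I_re]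
      have him : ((δ : ℂ) * Complex.exp (I * (s : ℂ))).im = δ * Real.sin s := by
        rw [mul_comm I, Complex.im_ofReal_mul, Complex.exp_ofReal_mul_I_im]
      have key := h.integrand_kx x (y := (δ : ℂ) * Complex.exp (I * (s : ℂ))) (by
        rw [hre, him]
        have hsin : Real.sin s ≤ 0 := by
          have := Real.sin_nonneg_of_nonneg_of_le_pi (x := s - π) (by linarith [hs.1]) (by linarith [hs.2])
          rw [Real.sin_sub_pi] at this
          linarith
        rcases hsin.lt_or_eq with h1 | h1
        · right
          refine ⟨mul_neg_of_pos_of_neg hδ₁ h1, ?_⟩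
          have := mul_le_mul_of_nonneg_left (Real.neg_one_le_sin s) hδ₁.le
          linarith
        · left
          have := Real.sin_sq_add_cos_sq s
          intro h0
          have hc0 : Real.cos s = 0 := by
            rcases mul_eq_zero.mp h0 with h2 | h2
            · exact absurd h2 hδ₁.ne'
            · exact h2
          rw [h1, hc0] at this
          norm_num at this)
      simp only [key]
      ring
  · refine intervalIntegral.integral_congr fun t ht => ?_
    rw [Set.uIcc_of_le hR.2] at ht
    have ht1 := ht.1
    simp only [Complex.ofReal_zero, zero_mul, add_zero]
    exact (h.integrand_kx x (y := t) (Or.inl (by simp only [Complex.ofReal_re]; linarith))).symm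

end
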